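/- arXiv:2105.11845 — 13 statements merged into one kernel-verified Lean document; each statement's English description precedes it below -/
import Mathlib

section
/- A point x ∈ ℝⁿ is critical for F = (f_1,…,f_m) if and only if at least one of the following holds: (i) ∇f_i(x) = 0 for some i ∈ {1,…,m}, or (ii) the set S(x) = {V ∈ ℝⁿ : ⟨∇f_i(x), V⟩ ≤ −‖∇f_i(x)‖ for all i = 1,…,m} is empty. -/
open RealInnerProductSpace

theorem exists_forall_mul_le_of_neg {ι 𝕜 : Type*} [Finite ι] [Field 𝕜] [LinearOrder 𝕜]
    [IsStrictOrderedRing 𝕜] {a : ι → 𝕜} (ha : ∀ i, a i < 0) (c : ι → 𝕜) :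
    ∃ t, ∀ i, t * a i ≤ c i := by
  have eventually_le : ∀ᶠ t in Filter.atTop, ∀ i, t * a i ≤ c i :=
    Filter.eventually_all.mpr fun i ↦
      (Filter.tendsto_id.atTop_mul_const_of_neg (ha i)).eventually_le_atBot (c i)
  exact eventually_le.exists

theorem exists_forall_dual_neg_iff_exists_forall_dual_le {ι 𝕜 E : Type*} [Finite ι] [Field 𝕜]
    [LinearOrder 𝕜] [IsStrictOrderedRing 𝕜] [AddCommMonoid E] [Module 𝕜 E]
    (φ : ι → Module.Dual 𝕜 E) {c : ι → 𝕜} (hc : ∀ i, c i < 0) :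
    (∃ v, ∀ i, φ i v < 0) ↔ ∃ v, ∀ i, φ i v ≤ c i := by
  constructor
  · rintro ⟨v, hv⟩
    obtain ⟨t, ht⟩ := exists_forall_mul_le_of_neg hv c
    exact ⟨t • v, fun i ↦ by simpa only [map_smul, smul_eq_mul] using ht i⟩
  · rintro ⟨v, hv⟩
    exact ⟨v, fun i ↦ (hv i).trans_lt (hc i)⟩

theorem critical_iff_grad_zero_or_S_empty_general {ι E : Type*} [Finite ι]
    [NormedAddCommGroup E] [NormedSpace ℝ E] (φ : ι → StrongDual ℝ E) :
    (¬ ∃ v, ∀ i, φ i v < 0) ↔ (∃ i, φ i = 0) ∨ {v | ∀ i, φ i v ≤ -‖φ i‖} = ∅ := by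
  by_cases h : ∃ i, φ i = 0
  · obtain ⟨i, hi⟩ := h
    have not_neg : ¬ ∃ v, ∀ j, φ j v < 0 := fun ⟨v, hv⟩ ↦ by simpa [hi] using hv i
    exact iff_of_true not_neg (.inl ⟨i, hi⟩)
  · have neg_norm_neg : ∀ i, -‖φ i‖ < 0 := fun i ↦
      neg_neg_of_pos (norm_pos_iff.mpr (not_exists.mp h i))
    rw [or_iff_right h, ← Set.not_nonempty_iff_eq_empty]
    exact not_congr (exists_forall_dual_neg_iff_exists_forall_dual_le
      (fun i ↦ (φ i).toLinearMap) neg_norm_neg)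

/-- A point `x` is critical for `F = (f_1, …, f_m)` iff some gradient vanishes at `x`
or the set `S(x) = {V | ⟪∇f_i(x), V⟫ ≤ -‖∇f_i(x)‖ ∀ i}` is empty. -/
theorem critical_iff_grad_zero_or_S_empty (n m : ℕ)
    (f : Fin m → EuclideanSpace ℝ (Fin n) → ℝ)
    (hf : ∀ i, Differentiable ℝ (f i))
    (x : EuclideanSpace ℝ (Fin n)) :
    (¬ ∃ v : EuclideanSpace ℝ (Fin n), ∀ i, ⟪gradient (f i) x, v⟫ < 0) ↔
      ((∃ i, gradient (f i) x = 0) ∨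
        {V : EuclideanSpace ℝ (Fin n) |
          ∀ i, ⟪gradient (f i) x, V⟫ ≤ -‖gradient (f i) x‖} = ∅) := by
  simpa only [gradient, InnerProductSpace.toDual_symm_apply, LinearIsometryEquiv.norm_map,
    LinearIsometryEquiv.map_eq_zero_iff] using
    critical_iff_grad_zero_or_S_empty_general fun i ↦ fderiv ℝ (f i) x
end

section
/- Let g_1,…,g_m ∈ ℝⁿ be nonzero vectors and let S = {v ∈ ℝⁿ : ⟨g_i, v⟩ ≤ −‖g_i‖ for all i = 1,…,m}. If for some R > 0 the intersection of the closed ball {v : ‖v‖ ≤ R} with S is empty, then there exists ε > 0 such that for every collection of vectors ĝ_1,…,ĝ_m ∈ ℝⁿ with ‖ĝ_i − g_i‖ ≤ ε for all i = 1,…,m, the intersection of {v : ‖v‖ ≤ R} with {v ∈ ℝⁿ : ⟨ĝ_i, v⟩ ≤ −‖ĝ_i‖ for all i = 1,…,m} is also empty. -/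
open RealInnerProductSpace

/-!
A vector `v` violates one of the constraints `⟪g i, v⟫ ≤ -‖g i‖` exactly when `⟪g i, v⟫ + ‖g i‖` is
positive for some `i`. These quantities are weakly continuous in `v`, and closed balls of a Hilbert
space are weakly compact (Banach–Alaoglu, after identifying `v` with the functional `⟪v, ·⟫`), so if
every `v` in the ball violates some constraint, it does so by more than some `δ > 0` independent of
`v`. Since `x ↦ ⟪x, v⟫ + ‖x‖` is Lipschitz with constant `‖v‖ + 1`, moving each `g i` by at most
`δ / (|R| + 1)` leaves the violated constraint violated.
-/

theorem exists_gt_forall_mem_exists_lt_of_isCompact {X ι α : Type*} [TopologicalSpace X]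
    [LinearOrder α] [DenselyOrdered α] [NoMaxOrder α] {K : Set X} (hK : IsCompact K)
    {f : ι → X → α} (hf : ∀ i, LowerSemicontinuousOn (f i) K) {c : α}
    (hc : ∀ x ∈ K, ∃ i, c < f i x) :
    ∃ d > c, ∀ x ∈ K, ∃ i, d < f i x := by
  refine hK.induction_on (p := fun s ↦ ∃ d > c, ∀ x ∈ s, ∃ i, d < f i x) ?empty ?mono ?union ?nhds
  case empty => simpa using exists_gt c
  case mono => exact fun _ _ hst ⟨d, hd, h⟩ ↦ ⟨d, hd, fun x hx ↦ h x (hst hx)⟩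
  case union =>
    rintro s t ⟨d, hd, hs⟩ ⟨e, he, ht⟩
    refine ⟨min d e, lt_min hd he, ?_⟩
    rintro x (hx | hx)
    · exact (hs x hx).imp fun _ ↦ (min_le_left d e).trans_lt
    · exact (ht x hx).imp fun _ ↦ (min_le_right d e).trans_lt
  case nhds =>
    intro x hx
    obtain ⟨i, hi⟩ := hc x hx
    obtain ⟨d, hcd, hdi⟩ := exists_between hi
    exact ⟨{y | d < f i y}, hf i x hx d hdi, d, hcd, fun _ hy ↦ ⟨i, hy⟩⟩

section Dual

variable {ι F : Type*} [SeminormedAddCommGroup F] [NormedSpace ℝ F] {g : ι → F} {R : ℝ}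

theorem lipschitzWith_apply_add_norm (φ : StrongDual ℝ F) :
    LipschitzWith (‖φ‖₊ + 1) fun x ↦ φ x + ‖x‖ :=
  φ.lipschitz.add lipschitzWith_one_norm

theorem exists_pos_forall_norm_le_exists_lt_apply_add_norm
    (hg : ∀ φ : StrongDual ℝ F, ‖φ‖ ≤ R → ∃ i, 0 < φ (g i) + ‖g i‖) :
    ∃ δ > 0, ∀ φ : StrongDual ℝ F, ‖φ‖ ≤ R → ∃ i, δ < φ (g i) + ‖g i‖ := by
  have continuous_violation (i : ι) : Continuous fun φ : WeakDual ℝ F ↦ φ (g i) + ‖g i‖ :=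
    (WeakDual.eval_continuous (g i)).add_const _
  obtain ⟨δ, hδ, h⟩ := exists_gt_forall_mem_exists_lt_of_isCompact
    (WeakDual.isCompact_closedBall (0 : StrongDual ℝ F) R)
    (fun i ↦ (continuous_violation i).lowerSemicontinuous.lowerSemicontinuousOn _)
    (fun φ hφ ↦ hg (WeakDual.toStrongDual φ) (mem_closedBall_zero_iff.mp hφ))
  exact ⟨δ, hδ, fun φ hφ ↦ h (StrongDual.toWeakDual φ) (mem_closedBall_zero_iff.mpr hφ)⟩

theorem exists_pos_forall_perturbation_exists_pos_apply_add_norm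
    (hg : ∀ φ : StrongDual ℝ F, ‖φ‖ ≤ R → ∃ i, 0 < φ (g i) + ‖g i‖) :
    ∃ ε > 0, ∀ g' : ι → F, (∀ i, ‖g' i - g i‖ ≤ ε) →
      ∀ φ : StrongDual ℝ F, ‖φ‖ ≤ R → ∃ i, 0 < φ (g' i) + ‖g' i‖ := by
  obtain ⟨δ, hδ, h⟩ := exists_pos_forall_norm_le_exists_lt_apply_add_norm hg
  refine ⟨δ / (|R| + 1), by positivity, fun g' hg' φ hφ ↦ ?_⟩
  obtain ⟨i, hi⟩ := h φ hφ
  have change_le : |(φ (g' i) + ‖g' i‖) - (φ (g i) + ‖g i‖)| ≤ δ := calc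
    _ ≤ (‖φ‖ + 1) * ‖g' i - g i‖ := (lipschitzWith_apply_add_norm φ).norm_sub_le _ _
    _ ≤ (|R| + 1) * (δ / (|R| + 1)) := by
      gcongr
      exacts [hφ.trans (le_abs_self R), hg' i]
    _ = δ := mul_div_cancel₀ _ (by positivity)
  exact ⟨i, by linarith [neg_le_of_abs_le change_le]⟩

end Dual

section Hilbert

variable {ι E : Type*} [NormedAddCommGroup E] [InnerProductSpace ℝ E] [CompleteSpace E]
  {g : ι → E} {R : ℝ}

theorem ball_inter_S_eq_empty_iff_forall_dual :
    {v : E | ‖v‖ ≤ R} ∩ {v : E | ∀ i, ⟪g i, v⟫ ≤ -‖g i‖} = ∅ ↔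
      ∀ φ : StrongDual ℝ E, ‖φ‖ ≤ R → ∃ i, 0 < φ (g i) + ‖g i‖ := by
  simp only [Set.eq_empty_iff_forall_notMem, Set.mem_inter_iff, Set.mem_ofPred_eq, not_and,
    not_forall, not_le, neg_lt_iff_pos_add, (InnerProductSpace.toDual ℝ E).surjective.forall,
    LinearIsometryEquiv.norm_map, InnerProductSpace.toDual_apply_apply, real_inner_comm]

theorem ball_inter_S_empty_stable_general
    (h : {v : E | ‖v‖ ≤ R} ∩ {v : E | ∀ i, ⟪g i, v⟫ ≤ -‖g i‖} = ∅) :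
    ∃ ε > 0, ∀ gh : ι → E, (∀ i, ‖gh i - g i‖ ≤ ε) →
      {v : E | ‖v‖ ≤ R} ∩ {v : E | ∀ i, ⟪gh i, v⟫ ≤ -‖gh i‖} = ∅ := by
  simp only [ball_inter_S_eq_empty_iff_forall_dual] at h ⊢
  exact exists_pos_forall_perturbation_exists_pos_apply_add_norm h

end Hilbert

/-- Lemma (lower semicontinuity, part 1): if the closed ball of radius `R` misses
`S = {v | ⟪g_i, v⟫ ≤ -‖g_i‖ ∀ i}`, then the same holds for every sufficiently small
perturbation of the vectors `g_i`. -/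
theorem ball_inter_S_empty_stable (n m : ℕ)
    (g : Fin m → EuclideanSpace ℝ (Fin n)) (hg : ∀ i, g i ≠ 0)
    (R : ℝ) (hR : 0 < R)
    (h : {v : EuclideanSpace ℝ (Fin n) | ‖v‖ ≤ R} ∩
        {v : EuclideanSpace ℝ (Fin n) | ∀ i, ⟪g i, v⟫ ≤ -‖g i‖} = ∅) :
    ∃ ε > 0, ∀ gh : Fin m → EuclideanSpace ℝ (Fin n),
      (∀ i, ‖gh i - g i‖ ≤ ε) →
      {v : EuclideanSpace ℝ (Fin n) | ‖v‖ ≤ R} ∩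
        {v : EuclideanSpace ℝ (Fin n) | ∀ i, ⟪gh i, v⟫ ≤ -‖gh i‖} = ∅ :=
  ball_inter_S_empty_stable_general h
end

section
/- Let f_1,…,f_m : ℝⁿ → ℝ be differentiable with L-Lipschitz gradients, and let (x_k) be a sequence of points converging to x_∞ ∈ ℝⁿ such that for every k the set S(x_k) is nonempty (so V_c(x_k) exists). If x_∞ is critical and ∇f_i(x_∞) ≠ 0 for all i = 1,…,m, then ‖V_c(x_k)‖ → ∞ as k → ∞. -/
open RealInnerProductSpace Filter Topology

/-- The feasible set defining the central descent direction at a point, given the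
gradients `g i` at that point. -/
def centralFeasible {n m : ℕ} (g : Fin m → EuclideanSpace ℝ (Fin n)) :
    Set (EuclideanSpace ℝ (Fin n)) :=
  {V | ∀ i, ⟪g i, V⟫ ≤ -‖g i‖}

/-!
A feasible `V` for a gradient `g` satisfies `‖g‖ ≤ -⟪g, V⟫`, so if `0 ≤ ⟪g', V⟫` for a nearby vector
`g'`, then `‖g‖ ≤ ⟪g' - g, V⟫ ≤ ‖g' - g‖ * ‖V‖`: as `g → g' ≠ 0`, this forces `‖V‖ → ∞`.
Criticality of the limit point supplies, for every `V`, an index `i` whose limiting gradient `g'`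
satisfies `0 ≤ ⟪g', V⟫`; finitely many indices make the blow-up uniform in `i`.
-/

section

variable {α ι E : Type*} [SeminormedAddCommGroup E] [InnerProductSpace ℝ E]

lemma norm_le_norm_sub_mul_of_inner_le_neg_norm {g g' V : E}
    (hV : ⟪g, V⟫ ≤ -‖g‖) (hnonneg : 0 ≤ ⟪g', V⟫) :
    ‖g'‖ ≤ ‖g' - g‖ * (1 + ‖V‖) :=
  calc
    ‖g'‖ ≤ ‖g' - g‖ + ‖g‖ := norm_le_norm_sub_add g' g
    _ ≤ ‖g' - g‖ + ⟪g' - g, V⟫ := by rw [inner_sub_left]; linarith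
    _ ≤ ‖g' - g‖ + ‖g' - g‖ * ‖V‖ := by gcongr; exact real_inner_le_norm _ _
    _ = ‖g' - g‖ * (1 + ‖V‖) := by ring

lemma eventually_forall_le_norm_of_inner_le_neg_norm {l : Filter α} {g : α → E} {g' : E}
    (hg : Tendsto g l (𝓝 g')) (hg' : ‖g'‖ ≠ 0) (M : ℝ) :
    ∀ᶠ a in l, ∀ V, ⟪g a, V⟫ ≤ -‖g a‖ → 0 ≤ ⟪g', V⟫ → M ≤ ‖V‖ := by
  have hlim : Tendsto (fun a => ‖g' - g a‖ * (1 + M)) l (𝓝 0) := by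
    simpa using (hg.const_sub g').norm.mul_const (1 + M)
  have hpos : 0 < ‖g'‖ := (norm_nonneg g').lt_of_ne' hg'
  filter_upwards [hlim.eventually_lt_const hpos] with a hsmall V hV hnonneg
  by_contra! hlt
  refine hsmall.not_ge ?_
  calc
    ‖g'‖ ≤ ‖g' - g a‖ * (1 + ‖V‖) := norm_le_norm_sub_mul_of_inner_le_neg_norm hV hnonneg
    _ ≤ ‖g' - g a‖ * (1 + M) := by gcongr

theorem norm_central_descent_tendsto_atTop_of_critical_limit_general [Finite ι]
    {l : Filter α} {g : ι → α → E} {g' : ι → E} {V : α → E}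
    (hg : ∀ i, Tendsto (g i) l (𝓝 (g' i))) (hV : ∀ᶠ a in l, ∀ i, ⟪g i a, V a⟫ ≤ -‖g i a‖)
    (hcrit : ¬ ∃ v : E, ∀ i, ⟪g' i, v⟫ < 0) (hnz : ∀ i, ‖g' i‖ ≠ 0) :
    Tendsto (fun a => ‖V a‖) l atTop := by
  push Not at hcrit
  refine tendsto_atTop.2 fun M => ?_
  have hlarge := eventually_all.2 fun i =>
    eventually_forall_le_norm_of_inner_le_neg_norm (hg i) (hnz i) M
  filter_upwards [hlarge, hV] with a hlarge hV
  obtain ⟨i, hnonneg⟩ := hcrit (V a)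
  exact hlarge i (V a) (hV i) hnonneg

end

/-- If `x_k → x_∞`, each `S(x_k)` is nonempty with minimum-norm element `V_c(x_k)`,
and `x_∞` is critical with all gradients nonzero at `x_∞`, then `‖V_c(x_k)‖ → ∞`. -/
theorem norm_central_descent_tendsto_atTop_of_critical_limit (n m : ℕ)
    (f : Fin m → EuclideanSpace ℝ (Fin n) → ℝ) (L : ℝ) (hL : 0 ≤ L)
    (hdiff : ∀ i, Differentiable ℝ (f i))
    (hlip : ∀ i, ∀ x y : EuclideanSpace ℝ (Fin n),
      ‖gradient (f i) x - gradient (f i) y‖ ≤ L * ‖x - y‖)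
    (x : ℕ → EuclideanSpace ℝ (Fin n)) (xinf : EuclideanSpace ℝ (Fin n))
    (hconv : Tendsto x atTop (𝓝 xinf))
    (Vc : ℕ → EuclideanSpace ℝ (Fin n))
    (hVc : ∀ k, Vc k ∈ centralFeasible (fun i => gradient (f i) (x k)) ∧
      ∀ w ∈ centralFeasible (fun i => gradient (f i) (x k)), ‖Vc k‖ ≤ ‖w‖)
    (hcrit : ¬ ∃ v : EuclideanSpace ℝ (Fin n), ∀ i, ⟪gradient (f i) xinf, v⟫ < 0)
    (hnz : ∀ i, gradient (f i) xinf ≠ 0) :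
    Tendsto (fun k => ‖Vc k‖) atTop atTop := by
  have hcont (i : Fin m) : Continuous (gradient (f i)) :=
    (LipschitzWith.of_dist_le' (by simpa only [dist_eq_norm] using hlip i)).continuous
  exact norm_central_descent_tendsto_atTop_of_critical_limit_general
    (fun i => ((hcont i).tendsto xinf).comp hconv) (.of_forall fun k => (hVc k).1) hcrit
    fun i => norm_ne_zero_iff.2 (hnz i)
end

section
/- Let f_1,…,f_m : ℝⁿ → ℝ be differentiable with L-Lipschitz gradients, and let (x_k) be a sequence of points converging to x_∞ ∈ ℝⁿ. If x_∞ is not critical (so that all ∇f_i(x_∞) ≠ 0 and S(x_∞) is nonempty), then for all sufficiently large k the set S(x_k) is nonempty, and the central descent directions converge: V_c(x_k) → V_c(x_∞) as k → ∞. -/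
open RealInnerProductSpace Filter Topology

/-!
The feasible sets are polyhedra `{v | ∀ i, ⟪a i, v⟫ ≤ b i}`, and noncriticality of the limit gives
a strictly feasible (Slater) point `w` for the limiting polyhedron `P`. Let `V` be the minimum-norm
point of `P` and `v k` those of the perturbed polyhedra. Strictly feasible points survive small
perturbations and are dense in `P`, so `limsup ‖v k‖ ≤ ‖V‖`. Conversely, pulling `v k` slightly
towards `w` lands it in `P`, on which `‖V‖ ^ 2 ≤ ⟪V, ·⟫`, so `liminf ⟪V, v k⟫ ≥ ‖V‖ ^ 2`.
Expanding `‖v k - V‖ ^ 2` then gives norm convergence, with no compactness involved.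
-/

section MinNormPoint

/-- A point of minimum norm of the set `C`, the central descent direction when `C` is the feasible
set `S(x)`. Existence and uniqueness are not part of the notion. -/
def IsMinNormPoint {E : Type*} [Norm E] (C : Set E) (v : E) : Prop :=
  v ∈ C ∧ ∀ w ∈ C, ‖v‖ ≤ ‖w‖

variable {E : Type*} [NormedAddCommGroup E] [InnerProductSpace ℝ E]

theorem IsMinNormPoint.norm_sq_le_inner {C : Set E} {v w : E} (hv : IsMinNormPoint C v)
    (hC : Convex ℝ C) (hw : w ∈ C) : ‖v‖ ^ 2 ≤ ⟪v, w⟫ := by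
  have : Nonempty C := ⟨v, hv.1⟩
  have hinf : ‖0 - v‖ = ⨅ u : C, ‖0 - (u : E)‖ := by
    simp only [zero_sub, norm_neg]
    exact le_antisymm (le_ciInf fun u => hv.2 u u.2)
      (ciInf_le ⟨0, by rintro _ ⟨u, rfl⟩; exact norm_nonneg _⟩ (⟨v, hv.1⟩ : C))
  have hangle := (norm_eq_iInf_iff_real_inner_le_zero hC hv.1).1 hinf w hw
  rw [zero_sub, inner_neg_left, inner_sub_right, real_inner_self_eq_norm_sq] at hangle
  linarith

theorem tendsto_of_norm_sq_lt_of_lt_inner {κ : Type*} {l : Filter κ} {v : κ → E} {v₀ : E}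
    (hnorm : ∀ r > ‖v₀‖ ^ 2, ∀ᶠ k in l, ‖v k‖ ^ 2 < r)
    (hinner : ∀ c < ‖v₀‖ ^ 2, ∀ᶠ k in l, c < ⟪v₀, v k⟫) : Tendsto v l (𝓝 v₀) := by
  have hsq : Tendsto (fun k => ‖v k - v₀‖ ^ 2) l (𝓝 0) := by
    refine tendsto_order.2 ⟨fun r hr => .of_forall fun k => hr.trans_le (sq_nonneg _),
      fun ε hε => ?_⟩
    filter_upwards [hnorm (‖v₀‖ ^ 2 + ε / 2) (by linarith),
      hinner (‖v₀‖ ^ 2 - ε / 4) (by linarith)] with k hk hk'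
    rw [norm_sub_sq_real, real_inner_comm]
    linarith
  exact tendsto_iff_norm_sub_tendsto_zero.2 (by simpa using hsq.sqrt)

end MinNormPoint

section Polyhedron

variable {E : Type*} [NormedAddCommGroup E] [InnerProductSpace ℝ E] {ι κ : Type*} {l : Filter κ}

/-- The polyhedron cut out by the constraints `⟪a i, ·⟫ ≤ b i`, the shape of the feasible sets
`S(x)`. The index type may be infinite, and a vanishing `a i` is allowed: its constraint then
holds everywhere or nowhere, according to the sign of `b i`. -/
def polyhedron (a : ι → E) (b : ι → ℝ) : Set E :=
  {v | ∀ i, ⟪a i, v⟫ ≤ b i}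

theorem convex_polyhedron (a : ι → E) (b : ι → ℝ) : Convex ℝ (polyhedron a b) := by
  rw [polyhedron, Set.ofPred_forall]
  exact convex_iInter fun i => convex_halfSpace_le (innerSL ℝ (a i)).isLinear (b i)

theorem polyhedron_subset_closure_setOf_inner_lt {a : ι → E} {b : ι → ℝ} {w : E}
    (hw : ∀ i, ⟪a i, w⟫ < b i) :
    polyhedron a b ⊆ closure {u | ∀ i, ⟪a i, u⟫ < b i} := by
  intro v hv
  have hsegment : openSegment ℝ v w ⊆ {u | ∀ i, ⟪a i, u⟫ < b i} := by
    rintro _ ⟨s, t, hs, ht, hst, rfl⟩ i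
    have hv' := mul_le_mul_of_nonneg_left (hv i) hs.le
    have hw' := mul_lt_mul_of_pos_left (hw i) ht
    calc ⟪a i, s • v + t • w⟫ = s * ⟪a i, v⟫ + t * ⟪a i, w⟫ := by
          rw [inner_add_right, inner_smul_right, inner_smul_right]
      _ < s * b i + t * b i := add_lt_add_of_le_of_lt hv' hw'
      _ = b i := by rw [← add_mul, hst, one_mul]
  exact closure_mono hsegment (segment_subset_closure_openSegment (left_mem_segment ℝ v w))

theorem exists_forall_inner_smul_lt [Finite ι] {a : ι → E} {v : E} (hv : ∀ i, ⟪a i, v⟫ < 0)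
    (b : ι → ℝ) : ∃ c : ℝ, ∀ i, ⟪a i, c • v⟫ < b i := by
  refine (eventually_all.2 fun i => ?_ : ∀ᶠ c : ℝ in atTop, ∀ i, ⟪a i, c • v⟫ < b i).exists
  simp only [inner_smul_right]
  exact (tendsto_id.atTop_mul_const_of_neg (hv i)).eventually_lt_atBot (b i)

theorem eventually_inner_lt_of_eventually_inner_le {a : κ → E} {a₀ : E} {b : κ → ℝ} {b₀ c : ℝ}
    {v : κ → E} (ha : Tendsto a l (𝓝 a₀)) (hb : Tendsto b l (𝓝 b₀))
    (hbdd : IsBoundedUnder (· ≤ ·) l (‖v ·‖)) (hv : ∀ᶠ k in l, ⟪a k, v k⟫ ≤ b k)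
    (hc : b₀ < c) : ∀ᶠ k in l, ⟪a₀, v k⟫ < c := by
  have hperturb : Tendsto (fun k => ⟪a₀ - a k, v k⟫) l (𝓝 0) := by
    have hzero : Tendsto (fun k => a₀ - a k) l (𝓝 0) := by
      simpa using (tendsto_const_nhds (x := a₀)).sub ha
    exact hzero.op_zero_isBoundedUnder_le hbdd (fun x y => ⟪x, y⟫) norm_inner_le_norm
  have hbound : Tendsto (fun k => b k + ⟪a₀ - a k, v k⟫) l (𝓝 b₀) := by
    simpa using hb.add hperturb
  filter_upwards [hv, hbound.eventually_lt_const hc] with k hk hlt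
  rw [inner_sub_left] at hlt
  linarith

variable {a : κ → ι → E} {a₀ : ι → E} {b : κ → ι → ℝ} {b₀ : ι → ℝ} {v : κ → E} {w : E}

theorem eventually_mem_polyhedron [Finite ι] (ha : ∀ i, Tendsto (a · i) l (𝓝 (a₀ i)))
    (hb : ∀ i, Tendsto (b · i) l (𝓝 (b₀ i))) (hw : ∀ i, ⟪a₀ i, w⟫ < b₀ i) :
    ∀ᶠ k in l, w ∈ polyhedron (a k) (b k) :=
  eventually_all.2 fun i =>
    (((ha i).inner tendsto_const_nhds).eventually_lt (hb i) (hw i)).mono fun _ => le_of_lt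

theorem eventually_convexCombination_mem_polyhedron [Finite ι]
    (ha : ∀ i, Tendsto (a · i) l (𝓝 (a₀ i))) (hb : ∀ i, Tendsto (b · i) l (𝓝 (b₀ i)))
    (hw : ∀ i, ⟪a₀ i, w⟫ < b₀ i) (hbdd : IsBoundedUnder (· ≤ ·) l (‖v ·‖))
    (hv : ∀ᶠ k in l, v k ∈ polyhedron (a k) (b k)) {s t : ℝ} (hs : 0 < s) (ht : 0 < t)
    (hst : s + t = 1) : ∀ᶠ k in l, s • v k + t • w ∈ polyhedron a₀ b₀ := by
  refine eventually_all.2 fun i => ?_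
  have hslack : 0 < t * (b₀ i - ⟪a₀ i, w⟫) := mul_pos ht (sub_pos.2 (hw i))
  have hc : b₀ i < (b₀ i - t * ⟪a₀ i, w⟫) / s := by
    rw [lt_div_iff₀ hs, eq_sub_of_add_eq hst]
    linarith
  filter_upwards [eventually_inner_lt_of_eventually_inner_le (ha i) (hb i) hbdd
    (hv.mono fun _ hk => hk i) hc] with k hk
  rw [lt_div_iff₀' hs] at hk
  rw [inner_add_right, inner_smul_right, inner_smul_right]
  linarith

variable {v₀ : E}

theorem eventually_norm_sq_lt_of_isMinNormPoint [Finite ι]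
    (ha : ∀ i, Tendsto (a · i) l (𝓝 (a₀ i))) (hb : ∀ i, Tendsto (b · i) l (𝓝 (b₀ i)))
    (hw : ∀ i, ⟪a₀ i, w⟫ < b₀ i) (hv₀ : v₀ ∈ polyhedron a₀ b₀)
    (hv : ∀ᶠ k in l, IsMinNormPoint (polyhedron (a k) (b k)) (v k)) {r : ℝ} (hr : ‖v₀‖ ^ 2 < r) :
    ∀ᶠ k in l, ‖v k‖ ^ 2 < r := by
  have hopen : IsOpen {u : E | ‖u‖ ^ 2 < r} := isOpen_lt (by fun_prop) continuous_const
  obtain ⟨u, hur, hu⟩ :=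
    mem_closure_iff.1 (polyhedron_subset_closure_setOf_inner_lt hw hv₀) _ hopen hr
  filter_upwards [hv, eventually_mem_polyhedron ha hb hu] with k hk huk
  calc ‖v k‖ ^ 2 ≤ ‖u‖ ^ 2 := by gcongr; exact hk.2 u huk
    _ < r := hur

theorem IsMinNormPoint.eventually_lt_inner [Finite ι]
    (ha : ∀ i, Tendsto (a · i) l (𝓝 (a₀ i))) (hb : ∀ i, Tendsto (b · i) l (𝓝 (b₀ i)))
    (hw : ∀ i, ⟪a₀ i, w⟫ < b₀ i) (hv₀ : IsMinNormPoint (polyhedron a₀ b₀) v₀)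
    (hbdd : IsBoundedUnder (· ≤ ·) l (‖v ·‖)) (hv : ∀ᶠ k in l, v k ∈ polyhedron (a k) (b k))
    {c : ℝ} (hc : c < ‖v₀‖ ^ 2) : ∀ᶠ k in l, c < ⟪v₀, v k⟫ := by
  obtain ⟨t, hlt, ht₀, ht₁⟩ :
      ∃ t : ℝ, (1 - t) * c + t * ⟪v₀, w⟫ < ‖v₀‖ ^ 2 ∧ 0 < t ∧ t < 1 := by
    have hlim : Tendsto (fun t : ℝ => (1 - t) * c + t * ⟪v₀, w⟫) (𝓝[>] 0) (𝓝 c) :=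
      ((by fun_prop : Continuous fun t : ℝ => (1 - t) * c + t * ⟪v₀, w⟫).tendsto' 0 c
        (by simp)).mono_left nhdsWithin_le_nhds
    exact ((hlim.eventually_lt_const hc).and (Ioo_mem_nhdsGT one_pos)).exists
  filter_upwards [eventually_convexCombination_mem_polyhedron ha hb hw hbdd hv
    (sub_pos.2 ht₁) ht₀ (sub_add_cancel 1 t)] with k hk
  have hle := hv₀.norm_sq_le_inner (convex_polyhedron a₀ b₀) hk
  rw [inner_add_right, inner_smul_right, inner_smul_right] at hle
  exact lt_of_mul_lt_mul_left (by linarith) (sub_pos.2 ht₁).le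

theorem IsMinNormPoint.tendsto_polyhedron [Finite ι]
    (ha : ∀ i, Tendsto (a · i) l (𝓝 (a₀ i))) (hb : ∀ i, Tendsto (b · i) l (𝓝 (b₀ i)))
    (hw : ∀ i, ⟪a₀ i, w⟫ < b₀ i) (hv₀ : IsMinNormPoint (polyhedron a₀ b₀) v₀)
    (hv : ∀ᶠ k in l, IsMinNormPoint (polyhedron (a k) (b k)) (v k)) : Tendsto v l (𝓝 v₀) := by
  have hbdd : IsBoundedUnder (· ≤ ·) l (‖v ·‖) :=
    ⟨‖w‖, eventually_map.2 <| by
      filter_upwards [hv, eventually_mem_polyhedron ha hb hw] with k hk hwk using hk.2 w hwk⟩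
  exact tendsto_of_norm_sq_lt_of_lt_inner
    (fun _ hr => eventually_norm_sq_lt_of_isMinNormPoint ha hb hw hv₀.1 hv hr)
    (fun _ hc => hv₀.eventually_lt_inner ha hb hw hbdd (hv.mono fun _ hk => hk.1) hc)

end Polyhedron

/-- The feasible set `S(x)` of the central descent problem, for gradients `g i` at `x` lying in an
arbitrary real inner product space. -/
def centralDescentSet {E ι : Type*} [NormedAddCommGroup E] [InnerProductSpace ℝ E] (g : ι → E) :
    Set E :=
  polyhedron g fun i => -‖g i‖

theorem central_descent_tendsto_of_noncritical_limit_general {E : Type*} [NormedAddCommGroup E]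
    [InnerProductSpace ℝ E] [CompleteSpace E] {ι κ : Type*} [Finite ι] {l : Filter κ}
    {f : ι → E → ℝ} {x : κ → E} {x₀ : E} (hcont : ∀ i, ContinuousAt (gradient (f i)) x₀)
    (hx : Tendsto x l (𝓝 x₀)) (hncrit : ∃ v : E, ∀ i, ⟪gradient (f i) x₀, v⟫ < 0) :
    (∀ᶠ k in l, (centralDescentSet fun i => gradient (f i) (x k)).Nonempty) ∧
    ∀ (V : κ → E) (V₀ : E),
      IsMinNormPoint (centralDescentSet fun i => gradient (f i) x₀) V₀ →
      (∀ᶠ k in l, (centralDescentSet fun i => gradient (f i) (x k)).Nonempty →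
        IsMinNormPoint (centralDescentSet fun i => gradient (f i) (x k)) (V k)) →
      Tendsto V l (𝓝 V₀) := by
  obtain ⟨v, hv⟩ := hncrit
  obtain ⟨c, hw⟩ := exists_forall_inner_smul_lt hv fun i => -‖gradient (f i) x₀‖
  have hgrad : ∀ i, Tendsto (fun k => gradient (f i) (x k)) l (𝓝 (gradient (f i) x₀)) :=
    fun i => (hcont i).tendsto.comp hx
  have hnorm : ∀ i, Tendsto (fun k => -‖gradient (f i) (x k)‖) l (𝓝 (-‖gradient (f i) x₀‖)) :=
    fun i => (hgrad i).norm.neg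
  have hnonempty : ∀ᶠ k in l, (centralDescentSet fun i => gradient (f i) (x k)).Nonempty :=
    (eventually_mem_polyhedron hgrad hnorm hw).mono fun _ => Set.nonempty_of_mem
  exact ⟨hnonempty, fun V V₀ hV₀ hV =>
    hV₀.tendsto_polyhedron hgrad hnorm hw (hnonempty.mp hV)⟩

/-- If `x_k → x_∞` and `x_∞` is not critical, then eventually `S(x_k)` is nonempty and
the central descent directions `V_c(x_k)` converge to `V_c(x_∞)`. -/
theorem central_descent_tendsto_of_noncritical_limit (n m : ℕ)
    (f : Fin m → EuclideanSpace ℝ (Fin n) → ℝ) (L : ℝ) (hL : 0 ≤ L)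
    (hdiff : ∀ i, Differentiable ℝ (f i))
    (hlip : ∀ i, ∀ x y : EuclideanSpace ℝ (Fin n),
      ‖gradient (f i) x - gradient (f i) y‖ ≤ L * ‖x - y‖)
    (x : ℕ → EuclideanSpace ℝ (Fin n)) (xinf : EuclideanSpace ℝ (Fin n))
    (hconv : Tendsto x atTop (𝓝 xinf))
    (hncrit : ∃ v : EuclideanSpace ℝ (Fin n), ∀ i, ⟪gradient (f i) xinf, v⟫ < 0) :
    (∃ K : ℕ, ∀ k ≥ K,
      (centralFeasible (fun i => gradient (f i) (x k))).Nonempty) ∧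
    ∀ (Vc : ℕ → EuclideanSpace ℝ (Fin n)) (Vcinf : EuclideanSpace ℝ (Fin n)),
      (Vcinf ∈ centralFeasible (fun i => gradient (f i) xinf) ∧
        ∀ w ∈ centralFeasible (fun i => gradient (f i) xinf), ‖Vcinf‖ ≤ ‖w‖) →
      (∀ k, (centralFeasible (fun i => gradient (f i) (x k))).Nonempty →
        Vc k ∈ centralFeasible (fun i => gradient (f i) (x k)) ∧
          ∀ w ∈ centralFeasible (fun i => gradient (f i) (x k)), ‖Vc k‖ ≤ ‖w‖) →
      Tendsto Vc atTop (𝓝 Vcinf) := by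
  have hgrad (i : Fin m) : LipschitzWith L.toNNReal (gradient (f i)) :=
    .of_dist_le' (by simpa only [dist_eq_norm] using hlip i)
  have h := central_descent_tendsto_of_noncritical_limit_general
    (fun i => (hgrad i).continuous.continuousAt) hconv hncrit
  exact ⟨eventually_atTop.1 h.1, fun Vc Vcinf hVcinf hVc => h.2 Vc Vcinf hVcinf (.of_forall hVc)⟩
end

section
/- Let g_1,…,g_m ∈ ℝⁿ be nonzero vectors such that S = {V ∈ ℝⁿ : ⟨g_i, V⟩ ≤ −‖g_i‖ for all i = 1,…,m} is nonempty, and let V_c be the minimum-norm element of S (so V_c ≠ 0). Then the unit vector V_c/‖V_c‖ is maximally distant from the non-descent directions: for every u ∈ ℝⁿ with ‖u‖ = 1 and ⟨g_i, u⟩ ≤ 0 for all i, one has min_{i=1,…,m} (−⟨g_i, u⟩)/‖g_i‖ ≤ min_{i=1,…,m} (−⟨g_i, V_c⟩)/(‖g_i‖·‖V_c‖); equivalently, the distance of u to ℝⁿ \ {v : ⟨g_i, v⟩ ≤ 0 ∀i} is at most the distance of V_c/‖V_c‖ to that set. -/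
open RealInnerProductSpace

/-!
Let `margin v = inf_i -⟪g i, v⟫ / ‖g i‖`, let `S` be the set of `V` with
`⟪g i, V⟫ ≤ -‖g i‖` for all `i`, and let `Vc` be its minimum-norm element. The margin is
positively homogeneous, and `S` is the region `1 ≤ margin`. If `margin u = δ > 0`, then
`δ⁻¹ • u ∈ S`, so minimality of `Vc` gives `‖Vc‖ ≤ δ⁻¹ * ‖u‖`. Hence every unit vector has margin
at most `1 / ‖Vc‖`, and `Vc / ‖Vc‖` has margin at least that.
-/

section DescentMargin

variable {ι : Sort*} {E : Type*} [SeminormedAddCommGroup E] [InnerProductSpace ℝ E]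

/-- The infimum over `i` of the signed distances from `v` to the hyperplanes `⟪g i, ·⟫ = 0`,
positive on the descent side `⟪g i, v⟫ < 0`. For `v` in the cone `⟪g i, ·⟫ ≤ 0`, this is the
distance from `v` to the complement of the cone. An index with `‖g i‖ = 0` contributes `0`. -/
noncomputable def descentMargin (g : ι → E) (v : E) : ℝ :=
  ⨅ i, -⟪g i, v⟫ / ‖g i‖

/-- The paper's set `S`, whose minimum-norm element is the central descent direction of `g`. -/
def unitDescentSet (g : ι → E) : Set E :=
  {V | ∀ i, ⟪g i, V⟫ ≤ -‖g i‖}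

theorem abs_neg_inner_div_norm_le (x v : E) : |-⟪x, v⟫ / ‖x‖| ≤ ‖v‖ := by
  rw [abs_div, abs_neg, abs_norm]
  exact div_le_of_le_mul₀ (norm_nonneg x) (norm_nonneg v)
    ((abs_real_inner_le_norm x v).trans_eq (mul_comm _ _))

theorem bddBelow_range_neg_inner_div_norm (g : ι → E) (v : E) :
    BddBelow (Set.range fun i => -⟪g i, v⟫ / ‖g i‖) :=
  ⟨-‖v‖, Set.forall_mem_range.2 fun i => (abs_le.1 (abs_neg_inner_div_norm_le (g i) v)).1⟩

theorem descentMargin_smul (g : ι → E) {c : ℝ} (hc : 0 ≤ c) (v : E) :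
    descentMargin g (c • v) = c * descentMargin g v := by
  simp only [descentMargin, Real.mul_iInf_of_nonneg hc, inner_smul_right, mul_div_assoc, ← mul_neg]

variable [Nonempty ι]

theorem descentMargin_le_norm (g : ι → E) (v : E) : descentMargin g v ≤ ‖v‖ :=
  (ciInf_le (bddBelow_range_neg_inner_div_norm g v) (Classical.arbitrary ι)).trans
    (abs_le.1 (abs_neg_inner_div_norm_le _ v)).2

variable {g : ι → E} {V : E}

theorem mem_unitDescentSet_iff_one_le_descentMargin (hg : ∀ i, ‖g i‖ ≠ 0) :
    V ∈ unitDescentSet g ↔ 1 ≤ descentMargin g V := by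
  rw [descentMargin, le_ciInf_iff (bddBelow_range_neg_inner_div_norm g V)]
  refine forall_congr' fun i => ?_
  rw [one_le_div ((norm_nonneg (g i)).lt_of_ne' (hg i)), le_neg]

theorem descentMargin_mul_norm_le_of_isMinOn (hg : ∀ i, ‖g i‖ ≠ 0)
    (hV : IsMinOn norm (unitDescentSet g) V) (u : E) : descentMargin g u * ‖V‖ ≤ ‖u‖ := by
  rcases le_or_gt (descentMargin g u) 0 with hδ | hδ
  · exact (mul_nonpos_of_nonpos_of_nonneg hδ (norm_nonneg V)).trans (norm_nonneg u)
  have hmem : (descentMargin g u)⁻¹ • u ∈ unitDescentSet g := by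
    rw [mem_unitDescentSet_iff_one_le_descentMargin hg, descentMargin_smul g (inv_nonneg.2 hδ.le),
      inv_mul_cancel₀ hδ.ne']
  have hnorm : ‖V‖ ≤ (descentMargin g u)⁻¹ * ‖u‖ := by
    simpa only [norm_smul, Real.norm_of_nonneg (inv_nonneg.2 hδ.le)] using isMinOn_iff.1 hV _ hmem
  exact (le_inv_mul_iff₀ hδ).1 hnorm

theorem central_descent_maximally_distant_general (hg : ∀ i, ‖g i‖ ≠ 0)
    (hV_mem : V ∈ unitDescentSet g) (hV_min : IsMinOn norm (unitDescentSet g) V)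
    {u : E} (hu : ‖u‖ ≤ 1) : descentMargin g u ≤ descentMargin g (‖V‖⁻¹ • V) := by
  have hmargin : 1 ≤ descentMargin g V := (mem_unitDescentSet_iff_one_le_descentMargin hg).1 hV_mem
  have hV : 0 < ‖V‖ := zero_lt_one.trans_le (hmargin.trans (descentMargin_le_norm g V))
  calc
    descentMargin g u ≤ ‖V‖⁻¹ * 1 := by
      rw [mul_one, ← one_div, le_div_iff₀ hV]
      exact (descentMargin_mul_norm_le_of_isMinOn hg hV_min u).trans hu
    _ ≤ ‖V‖⁻¹ * descentMargin g V := by gcongr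
    _ = descentMargin g (‖V‖⁻¹ • V) := (descentMargin_smul g (inv_nonneg.2 hV.le) V).symm

end DescentMargin

/-- The normalized central descent direction `V_c/‖V_c‖` is maximally distant from the
non-descent directions: any unit descent vector `u` has a smaller value of
`min_i (-⟪g_i, ·⟫)/‖g_i‖`. -/
theorem central_descent_maximally_distant (n m : ℕ) (hm : 0 < m)
    (g : Fin m → EuclideanSpace ℝ (Fin n)) (hg : ∀ i, g i ≠ 0)
    (Vc : EuclideanSpace ℝ (Fin n))
    (hVc_mem : ∀ i, ⟪g i, Vc⟫ ≤ -‖g i‖)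
    (hVc_min : ∀ w : EuclideanSpace ℝ (Fin n),
      (∀ i, ⟪g i, w⟫ ≤ -‖g i‖) → ‖Vc‖ ≤ ‖w‖)
    (u : EuclideanSpace ℝ (Fin n)) (hu : ‖u‖ = 1)
    (hud : ∀ i, ⟪g i, u⟫ ≤ 0) :
    Finset.univ.inf' ⟨⟨0, hm⟩, Finset.mem_univ _⟩
        (fun i => -⟪g i, u⟫ / ‖g i‖) ≤
      Finset.univ.inf' ⟨⟨0, hm⟩, Finset.mem_univ _⟩
        (fun i => -⟪g i, Vc⟫ / (‖g i‖ * ‖Vc‖)) := by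
  have : Nonempty (Fin m) := ⟨⟨0, hm⟩⟩
  simpa only [descentMargin, Finset.inf'_univ_eq_ciInf, inner_smul_right, ← neg_div,
    inv_mul_eq_div, div_div, mul_comm ‖Vc‖] using
    central_descent_maximally_distant_general (fun i => norm_ne_zero_iff.2 (hg i)) hVc_mem
      (isMinOn_iff.2 hVc_min) hu.le
end

section
/- Let f_1,…,f_m : ℝⁿ → ℝ be differentiable at x ∈ ℝⁿ and let h_1,…,h_m : ℝ → ℝ be differentiable with h_i'(f_i(x)) > 0 for each i. Then the constraint sets defining the central descent direction coincide: {V ∈ ℝⁿ : ⟨∇(h_i ∘ f_i)(x), V⟩ ≤ −‖∇(h_i ∘ f_i)(x)‖ for all i} = {V ∈ ℝⁿ : ⟨∇f_i(x), V⟩ ≤ −‖∇f_i(x)‖ for all i}; consequently the central descent direction of (h_1 ∘ f_1, …, h_m ∘ f_m) at x equals the central descent direction of (f_1, …, f_m) at x. -/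
open RealInnerProductSpace

section GradientChainRule

open scoped ComplexConjugate

variable {𝕜 F : Type*} [RCLike 𝕜] [NormedAddCommGroup F] [InnerProductSpace 𝕜 F] [CompleteSpace F]
  {f : F → 𝕜} {f' x : F} {h : 𝕜 → 𝕜}

theorem hasGradientAt_comp_of_hasDerivAt {h' : 𝕜} (hh : HasDerivAt h h' (f x))
    (hf : HasGradientAt f f' x) : HasGradientAt (h ∘ f) (conj h' • f') x := by
  rw [hasGradientAt_iff_hasFDerivAt, map_smulₛₗ, RCLike.conj_conj]
  exact hh.comp_hasFDerivAt x hf.hasFDerivAt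

theorem gradient_comp (hh : DifferentiableAt 𝕜 h (f x)) (hf : DifferentiableAt 𝕜 f x) :
    gradient (h ∘ f) x = conj (deriv h (f x)) • gradient f x :=
  (hasGradientAt_comp_of_hasDerivAt hh.hasDerivAt hf.hasGradientAt).gradient

end GradientChainRule

section CentralDescent

variable {ι E : Type*}

section Constraints

variable [SeminormedAddCommGroup E] [InnerProductSpace ℝ E]

/-- The constraint set of the central descent problem. It is defined for an arbitrary family `g` of
vectors, which stands for the gradients of the objectives at the point under consideration. -/
def centralDescentConstraints (g : ι → E) : Set E :=
  {V | ∀ i, ⟪g i, V⟫ ≤ -‖g i‖}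

/-- `V` is a central descent direction for the gradients `g`: an element of minimum norm of the
constraint set. This is a predicate on `V` because the constraint set may be empty. -/
def IsCentralDescentDirection (g : ι → E) (V : E) : Prop :=
  V ∈ centralDescentConstraints g ∧ IsMinOn norm (centralDescentConstraints g) V

theorem inner_smul_le_neg_norm_smul_iff {c : ℝ} (hc : 0 < c) (g V : E) :
    ⟪c • g, V⟫ ≤ -‖c • g‖ ↔ ⟪g, V⟫ ≤ -‖g‖ := by
  rw [real_inner_smul_left, norm_smul_of_nonneg hc.le, ← mul_neg, mul_le_mul_iff_right₀ hc]

theorem centralDescentConstraints_smul {c : ι → ℝ} (hc : ∀ i, 0 < c i) (g : ι → E) :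
    centralDescentConstraints (fun i ↦ c i • g i) = centralDescentConstraints g :=
  Set.ext fun V ↦ forall_congr' fun i ↦ inner_smul_le_neg_norm_smul_iff (hc i) (g i) V

end Constraints

theorem central_descent_invariant_monotone_transform_general
    [NormedAddCommGroup E] [InnerProductSpace ℝ E] [CompleteSpace E] {f : ι → E → ℝ} {x : E}
    (hf : ∀ i, DifferentiableAt ℝ (f i) x) {h : ι → ℝ → ℝ} (hh' : ∀ i, 0 < deriv (h i) (f i x)) :
    centralDescentConstraints (fun i ↦ gradient (h i ∘ f i) x) =
        centralDescentConstraints (fun i ↦ gradient (f i) x) ∧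
      ∀ V, IsCentralDescentDirection (fun i ↦ gradient (h i ∘ f i) x) V ↔
        IsCentralDescentDirection (fun i ↦ gradient (f i) x) V := by
  have gradient_eq_smul (i : ι) :
      gradient (h i ∘ f i) x = deriv (h i) (f i x) • gradient (f i) x :=
    gradient_comp (differentiableAt_of_deriv_ne_zero (hh' i).ne') (hf i)
  have constraints_eq : centralDescentConstraints (fun i ↦ gradient (h i ∘ f i) x) =
      centralDescentConstraints (fun i ↦ gradient (f i) x) := by
    simp only [gradient_eq_smul, centralDescentConstraints_smul hh']
  exact ⟨constraints_eq, fun V ↦ by simp only [IsCentralDescentDirection, constraints_eq]⟩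

end CentralDescent

/-- Invariance of the central descent direction under strictly increasing differentiable
reparametrizations of the objectives: the constraint sets coincide, and consequently the
minimum-norm elements (central descent directions) coincide. -/
theorem central_descent_invariant_monotone_transform (n m : ℕ)
    (f : Fin m → EuclideanSpace ℝ (Fin n) → ℝ)
    (x : EuclideanSpace ℝ (Fin n))
    (hf : ∀ i, DifferentiableAt ℝ (f i) x)
    (h : Fin m → ℝ → ℝ)
    (hh : ∀ i, Differentiable ℝ (h i))
    (hh' : ∀ i, 0 < deriv (h i) (f i x)) :
    {V : EuclideanSpace ℝ (Fin n) |
        ∀ i, ⟪gradient (h i ∘ f i) x, V⟫ ≤ -‖gradient (h i ∘ f i) x‖} =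
      {V : EuclideanSpace ℝ (Fin n) |
        ∀ i, ⟪gradient (f i) x, V⟫ ≤ -‖gradient (f i) x‖} ∧
    ∀ Vc : EuclideanSpace ℝ (Fin n),
      ((∀ i, ⟪gradient (h i ∘ f i) x, Vc⟫ ≤ -‖gradient (h i ∘ f i) x‖) ∧
        ∀ w : EuclideanSpace ℝ (Fin n),
          (∀ i, ⟪gradient (h i ∘ f i) x, w⟫ ≤ -‖gradient (h i ∘ f i) x‖) → ‖Vc‖ ≤ ‖w‖) ↔
      ((∀ i, ⟪gradient (f i) x, Vc⟫ ≤ -‖gradient (f i) x‖) ∧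
        ∀ w : EuclideanSpace ℝ (Fin n),
          (∀ i, ⟪gradient (f i) x, w⟫ ≤ -‖gradient (f i) x‖) → ‖Vc‖ ≤ ‖w‖) :=
  central_descent_invariant_monotone_transform_general hf hh'
end

section
/- Let f_1,…,f_m : ℝⁿ → ℝ be differentiable with L-Lipschitz gradients. Let (x_k) ⊂ ℝⁿ, positive step sizes (α_k), indices τ(i,k) with k − m ≤ τ(i,k) ≤ k, stale gradients ĝ_{i,k} = ∇f_i(x_{τ(i,k)}) all nonzero, and nonzero vectors V̂_k satisfying ⟨ĝ_{i,k}, V̂_k⟩ ≤ −‖ĝ_{i,k}‖ for all i (hence ‖V̂_k‖ ≥ 1), with x_{k+1} = x_k + α_k·V̂_k/‖V̂_k‖ for all k. If there is c₁ > 0 with ‖∇f_i(x_k)‖ ≥ c₁ for all i and k, then for every k ≥ m + 1 and every i = 1,…,m: f_i(x_{k+1}) − f_i(x_k) ≤ α_k·( 2L·Σ_{j=k−m}^{k} α_j + (L/2)·α_k − c₁/‖V̂_k‖ ). -/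
open RealInnerProductSpace Filter Topology

/-!
The gradient at the current iterate differs from the stale one by at most `L` times the distance
travelled since, and that distance is at most the sum of the intervening step sizes because every
step has length `α j`. Pairing with the unit direction `V k / ‖V k‖` and inserting the result into
the quadratic upper bound for functions with Lipschitz gradient gives the estimate.
-/

section NormedSpace

variable {E F : Type*} [NormedAddCommGroup E] [NormedSpace ℝ E]
  [NormedAddCommGroup F] [NormedSpace ℝ F] {K : NNReal}

theorem norm_sub_sub_fderiv_le_of_lipschitzWith {f : E → F} (hf : Differentiable ℝ f)
    (hlip : LipschitzWith K (fderiv ℝ f)) (x d : E) :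
    ‖f (x + d) - f x - fderiv ℝ f x d‖ ≤ K / 2 * ‖d‖ ^ 2 := by
  let remainder : ℝ → F := fun t ↦ f (x + t • d) - f x - t • fderiv ℝ f x d
  have hasDerivAt_remainder (t : ℝ) :
      HasDerivAt remainder (fderiv ℝ f (x + t • d) d - fderiv ℝ f x d) t := by
    have hline : HasDerivAt (fun t : ℝ ↦ x + t • d) d t := by
      simpa using ((hasDerivAt_id t).smul_const d).const_add x
    have hlinear : HasDerivAt (fun t : ℝ ↦ t • fderiv ℝ f x d) (fderiv ℝ f x d) t := by
      simpa using (hasDerivAt_id t).smul_const (fderiv ℝ f x d)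
    exact (((hf _).hasFDerivAt.comp_hasDerivAt t hline).sub_const (f x)).sub hlinear
  have hasDerivAt_bound (t : ℝ) :
      HasDerivAt (fun t : ℝ ↦ K / 2 * ‖d‖ ^ 2 * t ^ 2) (K * ‖d‖ ^ 2 * t) t :=
    ((hasDerivAt_pow 2 t).const_mul _).congr_deriv (by push_cast; ring)
  have norm_deriv_le (t : ℝ) (ht : t ∈ Set.Ico (0 : ℝ) 1) :
      ‖fderiv ℝ f (x + t • d) d - fderiv ℝ f x d‖ ≤ K * ‖d‖ ^ 2 * t :=
    calc
      ‖fderiv ℝ f (x + t • d) d - fderiv ℝ f x d‖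
        ≤ ‖fderiv ℝ f (x + t • d) - fderiv ℝ f x‖ * ‖d‖ :=
          (fderiv ℝ f (x + t • d) - fderiv ℝ f x).le_opNorm d
      _ ≤ K * ‖x + t • d - x‖ * ‖d‖ := by gcongr; exact hlip.norm_sub_le _ _
      _ = K * ‖d‖ ^ 2 * t := by
          rw [add_sub_cancel_left, norm_smul, Real.norm_of_nonneg ht.1]
          ring
  have norm_remainder_le := image_norm_le_of_norm_deriv_right_le_deriv_boundary
    (fun t _ ↦ (hasDerivAt_remainder t).continuousAt.continuousWithinAt)
    (fun t _ ↦ (hasDerivAt_remainder t).hasDerivWithinAt) (by simp [remainder])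
    hasDerivAt_bound norm_deriv_le (Set.right_mem_Icc.2 zero_le_one)
  simpa [remainder] using norm_remainder_le

theorem norm_smul_inv_norm_smul {a : ℝ} (ha : 0 ≤ a) {v : E} (hv : v ≠ 0) :
    ‖a • ‖v‖⁻¹ • v‖ = a := by
  simp [norm_smul, hv, abs_of_nonneg ha]

theorem norm_sub_le_sum_Ico_of_normalized_steps {x V : ℕ → E} {α : ℕ → ℝ} (hα : ∀ k, 0 ≤ α k)
    (hV : ∀ k, V k ≠ 0) (hx : ∀ k, x (k + 1) = x k + α k • ‖V k‖⁻¹ • V k) {a b : ℕ}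
    (hab : a ≤ b) : ‖x b - x a‖ ≤ ∑ j ∈ Finset.Ico a b, α j := by
  rw [← dist_eq_norm, dist_comm]
  refine dist_le_Ico_sum_of_dist_le hab fun {k} _ _ ↦ ?_
  rw [hx k, dist_self_add_right, norm_smul_inv_norm_smul (hα k) (hV k)]

end NormedSpace

section InnerProductSpace

variable {E : Type*} [NormedAddCommGroup E] [InnerProductSpace ℝ E]

theorem inner_inv_norm_smul_le_of_inner_le_neg_norm {g h v : E} (hv : v ≠ 0)
    (hfeas : ⟪h, v⟫ ≤ -‖h‖) : ⟪g, ‖v‖⁻¹ • v⟫ ≤ ‖g - h‖ - ‖h‖ / ‖v‖ := by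
  have hdiff : ⟪g - h, ‖v‖⁻¹ • v⟫ ≤ ‖g - h‖ := by
    simpa [norm_smul, hv] using real_inner_le_norm (g - h) (‖v‖⁻¹ • v)
  have hstale : ⟪h, ‖v‖⁻¹ • v⟫ ≤ -(‖h‖ / ‖v‖) := by
    rw [real_inner_smul_right, ← div_eq_inv_mul, ← neg_div]
    gcongr
  rw [inner_sub_left] at hdiff
  linarith

variable [CompleteSpace E] {f : E → ℝ} {K : NNReal}

theorem sub_le_inner_gradient_add_of_lipschitzWith (hf : Differentiable ℝ f)
    (hlip : LipschitzWith K (gradient f)) (x d : E) :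
    f (x + d) - f x ≤ ⟪gradient f x, d⟫ + K / 2 * ‖d‖ ^ 2 := by
  have hlip' : LipschitzWith K (fderiv ℝ f) := by
    rw [← toDual_comp_gradient]
    exact (InnerProductSpace.toDual ℝ E).isometry.lipschitzWith_iff K |>.2 hlip
  have hremainder := (le_abs_self _).trans (norm_sub_sub_fderiv_le_of_lipschitzWith hf hlip' x d)
  rw [← toDual_gradient, InnerProductSpace.toDual_apply_apply] at hremainder
  linarith

theorem incremental_decrease_bound_general (hf : Differentiable ℝ f)
    (hlip : LipschitzWith K (gradient f)) {x V : ℕ → E} {α : ℕ → ℝ} (hα : ∀ k, 0 ≤ α k)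
    (hV : ∀ k, V k ≠ 0) (hx : ∀ k, x (k + 1) = x k + α k • ‖V k‖⁻¹ • V k) {s k : ℕ} (hs : s ≤ k)
    (hfeas : ⟪gradient f (x s), V k⟫ ≤ -‖gradient f (x s)‖) :
    f (x (k + 1)) - f (x k) ≤
      α k * (K * (∑ j ∈ Finset.Ico s k, α j) + K / 2 * α k - ‖gradient f (x s)‖ / ‖V k‖) := by
  have hstale : ‖gradient f (x k) - gradient f (x s)‖ ≤ K * ∑ j ∈ Finset.Ico s k, α j :=
    (hlip.norm_sub_le _ _).trans <| by
      gcongr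
      exact norm_sub_le_sum_Ico_of_normalized_steps hα hV hx hs
  calc
    f (x (k + 1)) - f (x k)
      ≤ ⟪gradient f (x k), α k • ‖V k‖⁻¹ • V k⟫ + K / 2 * ‖α k • ‖V k‖⁻¹ • V k‖ ^ 2 :=
        hx k ▸ sub_le_inner_gradient_add_of_lipschitzWith hf hlip _ _
    _ = α k * (⟪gradient f (x k), ‖V k‖⁻¹ • V k⟫ + K / 2 * α k) := by
        rw [norm_smul_inv_norm_smul (hα k) (hV k), real_inner_smul_right]
        ring
    _ ≤ α k * (K * (∑ j ∈ Finset.Ico s k, α j) + K / 2 * α k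
          - ‖gradient f (x s)‖ / ‖V k‖) := by
        refine mul_le_mul_of_nonneg_left ?_ (hα k)
        linarith [inner_inv_norm_smul_le_of_inner_le_neg_norm (g := gradient f (x k)) (hV k) hfeas]

end InnerProductSpace

/-- Per-iteration decrease estimate for the incremental central descent method with stale
gradients: if all gradients stay bounded below in norm by `c₁ > 0`, then for `k ≥ m + 1`,
`f_i(x_{k+1}) - f_i(x_k) ≤ α_k (2L Σ_{j=k-m}^{k} α_j + (L/2) α_k - c₁/‖V̂_k‖)`. -/
theorem incremental_decrease_bound (n m : ℕ)
    (f : Fin m → EuclideanSpace ℝ (Fin n) → ℝ)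
    (L : ℝ) (hL : 0 ≤ L)
    (hdiff : ∀ i, Differentiable ℝ (f i))
    (hlip : ∀ i, ∀ x y : EuclideanSpace ℝ (Fin n),
      ‖gradient (f i) x - gradient (f i) y‖ ≤ L * ‖x - y‖)
    (x : ℕ → EuclideanSpace ℝ (Fin n))
    (α : ℕ → ℝ) (hα : ∀ k, 0 < α k)
    (τ : Fin m → ℕ → ℕ)
    (hτ : ∀ i k, k - m ≤ τ i k ∧ τ i k ≤ k)
    (hgnz : ∀ i k, gradient (f i) (x (τ i k)) ≠ 0)
    (V : ℕ → EuclideanSpace ℝ (Fin n)) (hVnz : ∀ k, V k ≠ 0)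
    (hfeas : ∀ i k, ⟪gradient (f i) (x (τ i k)), V k⟫ ≤ -‖gradient (f i) (x (τ i k))‖)
    (hupd : ∀ k, x (k + 1) = x k + α k • ‖V k‖⁻¹ • V k)
    (c₁ : ℝ) (hc₁ : 0 < c₁)
    (hgrad : ∀ i k, c₁ ≤ ‖gradient (f i) (x k)‖) :
    ∀ k, m + 1 ≤ k → ∀ i,
      f i (x (k + 1)) - f i (x k) ≤
        α k * (2 * L * (∑ j ∈ Finset.Icc (k - m) k, α j) + L / 2 * α k - c₁ / ‖V k‖) := by
  intro k _ i
  have hαk := hα k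
  lift L to NNReal using hL
  refine (incremental_decrease_bound_general (hdiff i) (lipschitzWith_iff_norm_sub_le.2 (hlip i))
    (fun j ↦ (hα j).le) hVnz hupd (hτ i k).2 (hfeas i k)).trans ?_
  gcongr α k * (?_ * ?_ + L / 2 * α k - ?_ / ‖V k‖)
  · exact Finset.sum_nonneg fun j _ ↦ (hα j).le
  · exact le_mul_of_one_le_left L.2 one_le_two
  · exact Finset.sum_le_sum_of_subset_of_nonneg
      (Finset.Ico_subset_Icc_self.trans (Finset.Icc_subset_Icc_left (hτ i k).1))
      fun j _ _ ↦ (hα j).le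
  · exact hgrad i (τ i k)
end

section
/- Let f_1,…,f_m : ℝⁿ → ℝ be differentiable with L-Lipschitz gradients. Let (x_k) ⊂ ℝⁿ, positive step sizes (α_k) with α_k → 0, indices τ(i,k) with k − m ≤ τ(i,k) ≤ k, stale gradients ĝ_{i,k} = ∇f_i(x_{τ(i,k)}) all nonzero, and nonzero vectors V̂_k satisfying ⟨ĝ_{i,k}, V̂_k⟩ ≤ −‖ĝ_{i,k}‖ for all i, with x_{k+1} = x_k + α_k·V̂_k/‖V̂_k‖ for all k. Suppose there are constants c₁ > 0 and c₂ > 0 such that ‖∇f_i(x_k)‖ ≥ c₁ for all i and k, and ‖V̂_k‖ ≤ c₂ for all k. Then there exists k̄ ∈ ℕ such that for all k ≥ k̄ and all i = 1,…,m: f_i(x_{k+1}) − f_i(x_k) ≤ −(α_k·c₁)/(2c₂). -/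
open RealInnerProductSpace Filter Topology

/-!
Since the steps vanish and the delays are bounded, eventually `x k` and `x (k + 1)` both lie in a
small ball around the stale point `x (τ i k)`. On that ball the gradient of `f i` differs little
from the stale gradient, which has slope at most `-c₁ / c₂` along `V k / ‖V k‖`. By the mean value
inequality every rate of decrease below `c₁ / c₂`, in particular half of it, is eventually attained,
uniformly in `i`.
-/

theorem eventually_forall_mem_Icc_dist_lt {X : Type*} [PseudoMetricSpace X] {x : ℕ → X}
    (hx : Tendsto (fun k => dist (x k) (x (k + 1))) atTop (𝓝 0)) (d : ℕ) {ε : ℝ} (hε : 0 < ε) :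
    ∀ᶠ k in atTop, ∀ j ∈ Set.Icc (k - d) k, dist (x j) (x k) < ε := by
  have hδ : 0 < ε / (d + 1) := by positivity
  obtain ⟨N, hN⟩ := eventually_atTop.1 (hx.eventually_le_const hδ)
  filter_upwards [eventually_ge_atTop (N + d)] with k hk j ⟨hkj, hjk⟩
  have hlen : ((k - j : ℕ) : ℝ) < d + 1 := by exact_mod_cast (by lia : k - j < d + 1)
  calc dist (x j) (x k)
      ≤ ∑ _l ∈ Finset.Ico j k, ε / (d + 1) :=
        dist_le_Ico_sum_of_dist_le hjk fun {l} hjl _ => hN l (by lia)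
    _ = (k - j : ℕ) * (ε / (d + 1)) := by rw [Finset.sum_const, Nat.card_Ico, nsmul_eq_mul]
    _ < (d + 1) * (ε / (d + 1)) := by gcongr
    _ = ε := mul_div_cancel₀ ε (by positivity)

theorem uniformEquicontinuous_of_norm_sub_le {ι E F : Type*} [SeminormedAddCommGroup E]
    [SeminormedAddCommGroup F] {g : ι → E → F} {L : ℝ}
    (hg : ∀ i x y, ‖g i x - g i y‖ ≤ L * ‖x - y‖) : UniformEquicontinuous g :=
  LipschitzWith.uniformEquicontinuous g L.toNNReal fun i =>
    LipschitzWith.of_dist_le' fun x y => by simpa only [dist_eq_norm] using hg i x y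

section NormedSpace

variable {E : Type*} [SeminormedAddCommGroup E] [NormedSpace ℝ E]

theorem norm_inv_norm_smul_le_one (v : E) : ‖‖v‖⁻¹ • v‖ ≤ 1 := by
  rw [norm_smul, norm_inv, norm_norm]
  exact inv_mul_le_one

theorem tendsto_dist_succ_of_eq_add_smul {x u : ℕ → E} {α : ℕ → ℝ}
    (hα : Tendsto α atTop (𝓝 0)) (hu : ∀ k, ‖u k‖ ≤ 1) (hx : ∀ k, x (k + 1) = x k + α k • u k) :
    Tendsto (fun k => dist (x k) (x (k + 1))) atTop (𝓝 0) := by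
  refine squeeze_zero (fun _ => dist_nonneg) (fun k => ?_) (tendsto_zero_iff_norm_tendsto_zero.1 hα)
  rw [hx, dist_self_add_right, norm_smul]
  exact mul_le_of_le_one_right (norm_nonneg _) (hu k)

end NormedSpace

section InnerProductSpace

variable {E : Type*} [NormedAddCommGroup E] [InnerProductSpace ℝ E]

theorem inner_inv_norm_smul_le_neg_div {g v : E} {a b : ℝ} (ha : 0 < a) (hgv : ⟪g, v⟫ ≤ -a)
    (hv : ‖v‖ ≤ b) : ⟪g, ‖v‖⁻¹ • v⟫ ≤ -(a / b) := by
  have hv0 : 0 < ‖v‖ := by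
    rw [norm_pos_iff]
    rintro rfl
    rw [inner_zero_right] at hgv
    linarith
  calc ⟪g, ‖v‖⁻¹ • v⟫ = ⟪g, v⟫ / ‖v‖ := by rw [real_inner_smul_right, inv_mul_eq_div]
    _ ≤ -a / ‖v‖ := by gcongr
    _ = -(a / ‖v‖) := neg_div _ _
    _ ≤ -(a / b) := by gcongr

variable [CompleteSpace E] {f : E → ℝ} {f' : E → E} {s : Set E} {g : E} {ε : ℝ}

theorem norm_image_sub_sub_inner_le (hs : Convex ℝ s)
    (hf : ∀ z ∈ s, HasGradientWithinAt f (f' z) s z) (hg : ∀ z ∈ s, ‖f' z - g‖ ≤ ε)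
    {x y : E} (hx : x ∈ s) (hy : y ∈ s) :
    ‖f y - f x - ⟪g, y - x⟫‖ ≤ ε * ‖y - x‖ := by
  refine hs.norm_image_sub_le_of_norm_hasFDerivWithin_le'
    (φ := InnerProductSpace.toDual ℝ E g) (fun z hz => (hf z hz).hasFDerivWithinAt)
    (fun z hz => ?_) hx hy
  rw [← map_sub, LinearIsometryEquiv.norm_map]
  exact hg z hz

theorem image_add_smul_sub_le (hs : Convex ℝ s)
    (hf : ∀ z ∈ s, HasGradientWithinAt f (f' z) s z) (hg : ∀ z ∈ s, ‖f' z - g‖ ≤ ε)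
    {x u : E} {t c : ℝ} (hx : x ∈ s) (hxu : x + t • u ∈ s) (ht : 0 ≤ t) (hu : ‖u‖ ≤ 1)
    (hgu : ⟪g, u⟫ ≤ -c) :
    f (x + t • u) - f x ≤ -(t * (c - ε)) := by
  have hε : 0 ≤ ε := (norm_nonneg _).trans (hg x hx)
  have hmvt := (Real.le_norm_self _).trans (norm_image_sub_sub_inner_le hs hf hg hx hxu)
  rw [add_sub_cancel_left, real_inner_smul_right, norm_smul, Real.norm_of_nonneg ht] at hmvt
  calc f (x + t • u) - f x ≤ t * ⟪g, u⟫ + ε * (t * ‖u‖) := by linarith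
    _ ≤ t * -c + ε * (t * 1) := by gcongr
    _ = -(t * (c - ε)) := by ring

theorem incremental_eventual_decrease_general {ι : Type*} {f : ι → E → ℝ}
    (hdiff : ∀ i, Differentiable ℝ (f i))
    (hequi : UniformEquicontinuous fun i => gradient (f i))
    {x : ℕ → E} {α : ℕ → ℝ} (hα : ∀ k, 0 ≤ α k) (hα0 : Tendsto α atTop (𝓝 0))
    {d : ℕ} {τ : ι → ℕ → ℕ} (hτ : ∀ i k, k - d ≤ τ i k ∧ τ i k ≤ k)
    {V : ℕ → E}
    (hfeas : ∀ i k, ⟪gradient (f i) (x (τ i k)), V k⟫ ≤ -‖gradient (f i) (x (τ i k))‖)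
    (hupd : ∀ k, x (k + 1) = x k + α k • ‖V k‖⁻¹ • V k)
    {c₁ : ℝ} (hc₁ : 0 < c₁) (hgrad : ∀ i k, c₁ ≤ ‖gradient (f i) (x k)‖)
    {c₂ : ℝ} (hVbd : ∀ k, ‖V k‖ ≤ c₂) {c : ℝ} (hc : c < c₁ / c₂) :
    ∀ᶠ k in atTop, ∀ i, f i (x (k + 1)) - f i (x k) ≤ -(α k * c) := by
  obtain ⟨δ, hδ, hclose⟩ :=
    Metric.uniformEquicontinuous_iff.1 hequi (c₁ / c₂ - c) (sub_pos.2 hc)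
  have hwindow := eventually_forall_mem_Icc_dist_lt
    (tendsto_dist_succ_of_eq_add_smul hα0 (fun k => norm_inv_norm_smul_le_one (V k)) hupd)
  filter_upwards [hwindow d hδ, (tendsto_add_atTop_nat 1).eventually (hwindow (d + 1) hδ)]
    with k hk hk_succ i
  obtain ⟨hτ_ge, hτ_le⟩ := hτ i k
  have hxk : x k ∈ Metric.ball (x (τ i k)) δ := Metric.mem_ball'.2 (hk _ ⟨hτ_ge, hτ_le⟩)
  have hxk_succ : x (k + 1) ∈ Metric.ball (x (τ i k)) δ :=
    Metric.mem_ball'.2 (hk_succ _ ⟨by lia, by lia⟩)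
  have hstale : ∀ z ∈ Metric.ball (x (τ i k)) δ,
      ‖gradient (f i) z - gradient (f i) (x (τ i k))‖ ≤ c₁ / c₂ - c := fun z hz =>
    (dist_eq_norm (gradient (f i) z) _).symm.trans_le (hclose z _ hz i).le
  have hslope : ⟪gradient (f i) (x (τ i k)), ‖V k‖⁻¹ • V k⟫ ≤ -(c₁ / c₂) :=
    inner_inv_norm_smul_le_neg_div hc₁ ((hfeas i k).trans (neg_le_neg (hgrad i _))) (hVbd k)
  have hgradient : ∀ z ∈ Metric.ball (x (τ i k)) δ,
      HasGradientWithinAt (f i) (gradient (f i) z) (Metric.ball (x (τ i k)) δ) z := fun z _ =>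
    hasGradientWithinAt_iff_hasFDerivWithinAt.2
      (hdiff i z).hasGradientAt.hasFDerivAt.hasFDerivWithinAt
  rw [hupd] at hxk_succ ⊢
  simpa only [sub_sub_cancel] using image_add_smul_sub_le (convex_ball _ δ)
    hgradient hstale hxk hxk_succ (hα k) (norm_inv_norm_smul_le_one _) hslope

end InnerProductSpace

/-- Eventual uniform decrease for the incremental central descent method: if the step
sizes vanish, gradient norms are bounded below by `c₁ > 0`, and the directions `V̂_k` are
bounded by `c₂`, then eventually `f_i(x_{k+1}) - f_i(x_k) ≤ -(α_k c₁)/(2 c₂)` for all `i`. -/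
theorem incremental_eventual_decrease (n m : ℕ)
    (f : Fin m → EuclideanSpace ℝ (Fin n) → ℝ)
    (L : ℝ) (hL : 0 ≤ L)
    (hdiff : ∀ i, Differentiable ℝ (f i))
    (hlip : ∀ i, ∀ x y : EuclideanSpace ℝ (Fin n),
      ‖gradient (f i) x - gradient (f i) y‖ ≤ L * ‖x - y‖)
    (x : ℕ → EuclideanSpace ℝ (Fin n))
    (α : ℕ → ℝ) (hα : ∀ k, 0 < α k)
    (hα0 : Tendsto α atTop (𝓝 0))
    (τ : Fin m → ℕ → ℕ)
    (hτ : ∀ i k, k - m ≤ τ i k ∧ τ i k ≤ k)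
    (hgnz : ∀ i k, gradient (f i) (x (τ i k)) ≠ 0)
    (V : ℕ → EuclideanSpace ℝ (Fin n)) (hVnz : ∀ k, V k ≠ 0)
    (hfeas : ∀ i k, ⟪gradient (f i) (x (τ i k)), V k⟫ ≤ -‖gradient (f i) (x (τ i k))‖)
    (hupd : ∀ k, x (k + 1) = x k + α k • ‖V k‖⁻¹ • V k)
    (c₁ : ℝ) (hc₁ : 0 < c₁)
    (hgrad : ∀ i k, c₁ ≤ ‖gradient (f i) (x k)‖)
    (c₂ : ℝ) (hc₂ : 0 < c₂)
    (hVbd : ∀ k, ‖V k‖ ≤ c₂) :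
    ∃ kbar : ℕ, ∀ k ≥ kbar, ∀ i,
      f i (x (k + 1)) - f i (x k) ≤ -(α k * c₁) / (2 * c₂) := by
  have hc : c₁ / (2 * c₂) < c₁ / c₂ := div_lt_div_of_pos_left hc₁ hc₂ (by linarith)
  simpa only [neg_div, mul_div_assoc, eventually_atTop] using
    incremental_eventual_decrease_general hdiff (uniformEquicontinuous_of_norm_sub_le hlip)
      (fun k => (hα k).le) hα0 hτ hfeas hupd hc₁ hgrad hVbd hc
end

section
/- Let f_1,…,f_m : ℝⁿ → ℝ be differentiable with L-Lipschitz gradients. Let (x_k) ⊂ ℝⁿ, positive step sizes (α_k) with α_k → 0 and Σ_k α_k = ∞, indices τ(i,k) with k − m ≤ τ(i,k) ≤ k, stale gradients ĝ_{i,k} = ∇f_i(x_{τ(i,k)}) all nonzero, and nonzero vectors V̂_k satisfying ⟨ĝ_{i,k}, V̂_k⟩ ≤ −‖ĝ_{i,k}‖ for all i, with x_{k+1} = x_k + α_k·V̂_k/‖V̂_k‖ for all k. Suppose there are constants c₁ > 0 and c₂ > 0 such that ‖∇f_i(x_k)‖ ≥ c₁ for all i and k, and ‖V̂_k‖ ≤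 c₂ for all k. Then f_i(x_k) → −∞ as k → ∞ for every i = 1,…,m. -/
open RealInnerProductSpace Filter Topology

/-!
Since the step lengths tend to zero and the delays are bounded, the stale iterate `x (τ k)` and the
whole segment from `x k` to `x (k + 1)` are eventually arbitrarily close. Uniform continuity of the
derivative then makes the change of `f` over one step agree with its stale linearisation up to
`o(α k)`. The linearisation decreases at rate at least `c₁ / c₂`, so eventually `f` drops by at
least `c₁ / (2 * c₂) * α k` in step `k`, and these decrements sum to infinity.
-/

theorem tendsto_atBot_of_eventually_succ_le_add {G : Type*} [AddCommGroup G] [PartialOrder G]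
    [IsOrderedAddMonoid G] {a b : ℕ → G} (hab : ∀ᶠ k in atTop, a (k + 1) ≤ a k + b k)
    (hb : Tendsto (fun N => ∑ k ∈ Finset.range N, b k) atTop atBot) :
    Tendsto a atTop atBot := by
  obtain ⟨K, hK⟩ := eventually_atTop.1 hab
  set S : ℕ → G := fun N => ∑ k ∈ Finset.range N, b k with hS
  have sub_antitone : ∀ k, K ≤ k → a k - S k ≤ a K - S K := by
    intro k hk
    induction k, hk using Nat.le_induction with
    | base => exact le_rfl
    | succ k hk ih =>
      calc a (k + 1) - S (k + 1) = a (k + 1) - b k - S k := by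
            simp only [hS, Finset.sum_range_succ]; abel
        _ ≤ a k - S k := sub_le_sub_right (sub_le_iff_le_add.2 (hK k hk)) _
        _ ≤ a K - S K := ih
  have le_sum : ∀ᶠ k in atTop, a k ≤ a K - S K + S k :=
    eventually_atTop.2 ⟨K, fun k hk => sub_le_iff_le_add.1 (sub_antitone k hk)⟩
  exact tendsto_atBot_mono' atTop le_sum (tendsto_atBot_add_const_left _ _ hb)

theorem tendsto_dist_of_bounded_delay {X : Type*} [PseudoMetricSpace X] {x : ℕ → X} {τ : ℕ → ℕ}
    {d : ℕ} (hx : Tendsto (fun k => dist (x k) (x (k + 1))) atTop (𝓝 0))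
    (hτ_le : ∀ k, τ k ≤ k) (hle_τ : ∀ k, k ≤ τ k + d) :
    Tendsto (fun k => dist (x (τ k)) (x k)) atTop (𝓝 0) := by
  have hτ : Tendsto τ atTop atTop :=
    tendsto_atTop_mono (fun k => Nat.sub_le_iff_le_add.2 (hle_τ k)) (tendsto_sub_atTop_nat d)
  have path_le : ∀ k, dist (x (τ k)) (x k) ≤
      ∑ j ∈ Finset.range d, dist (x (τ k + j)) (x (τ k + j + 1)) := fun k =>
    calc dist (x (τ k)) (x k) ≤ ∑ j ∈ Finset.Ico (τ k) k, dist (x j) (x (j + 1)) :=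
          dist_le_Ico_sum_dist x (hτ_le k)
      _ ≤ ∑ j ∈ Finset.Ico (τ k) (τ k + d), dist (x j) (x (j + 1)) :=
          Finset.sum_le_sum_of_subset_of_nonneg (Finset.Ico_subset_Ico_right (hle_τ k))
            fun _ _ _ => dist_nonneg
      _ = ∑ j ∈ Finset.range d, dist (x (τ k + j)) (x (τ k + j + 1)) := by
          rw [Finset.sum_Ico_eq_sum_range, Nat.add_sub_cancel_left]
  have path_tendsto : Tendsto
      (fun k => ∑ j ∈ Finset.range d, dist (x (τ k + j)) (x (τ k + j + 1))) atTop (𝓝 0) := by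
    simpa only [Finset.sum_const_zero, Function.comp_def] using
      tendsto_finsetSum (Finset.range d) fun j _ =>
        hx.comp (tendsto_atTop_mono (fun k => Nat.le_add_right (τ k) j) hτ)
  exact squeeze_zero (fun _ => dist_nonneg) path_le path_tendsto

theorem norm_smul_inv_norm_smul_le {E : Type*} [SeminormedAddCommGroup E] [NormedSpace ℝ E]
    {a : ℝ} (ha : 0 ≤ a) (v : E) : ‖a • ‖v‖⁻¹ • v‖ ≤ a := by
  rw [norm_smul, norm_smul, norm_inv, norm_norm, Real.norm_of_nonneg ha]
  exact mul_le_of_le_one_right ha inv_mul_le_one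

section NormedSpace

variable {E F : Type*} [NormedAddCommGroup E] [NormedSpace ℝ E]
  [NormedAddCommGroup F] [NormedSpace ℝ F]

theorem isLittleO_sub_sub_of_uniformContinuous_hasFDerivAt {ι : Type*} {l : Filter ι}
    {f : E → F} {f' : E → E →L[ℝ] F} {w x y : ι → E}
    (hf : ∀ z, HasFDerivAt f (f' z) z) (hf' : UniformContinuous f')
    (hwx : Tendsto (fun k => dist (w k) (x k)) l (𝓝 0))
    (hxy : Tendsto (fun k => dist (x k) (y k)) l (𝓝 0)) :
    (fun k => f (y k) - f (x k) - f' (w k) (y k - x k)) =o[l] fun k => y k - x k := by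
  refine Asymptotics.isLittleO_iff.2 fun ε hε => ?_
  obtain ⟨δ, hδ, hδε⟩ := Metric.uniformContinuous_iff.1 hf' ε hε
  have sum_tendsto : Tendsto (fun k => dist (w k) (x k) + dist (x k) (y k)) l (𝓝 0) := by
    simpa only [add_zero] using hwx.add hxy
  filter_upwards [sum_tendsto.eventually_lt_const hδ] with k hk
  have deriv_near : ∀ z ∈ segment ℝ (x k) (y k), ‖f' z - f' (w k)‖ ≤ ε := by
    intro z hz
    have hzx : dist (x k) z ≤ dist (x k) (y k) := by
      simpa only [dist_eq_norm_sub'] using norm_sub_le_of_mem_segment hz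
    have hzw : dist z (w k) < δ := by
      linarith [dist_triangle_left z (w k) (x k), dist_comm (w k) (x k)]
    exact (dist_eq_norm (f' z) (f' (w k)) ▸ hδε hzw).le
  exact (convex_segment (x k) (y k)).norm_image_sub_le_of_norm_hasFDerivWithin_le'
    (fun z _ => (hf z).hasFDerivWithinAt) deriv_near (left_mem_segment ℝ _ _)
    (right_mem_segment ℝ _ _)

theorem map_inv_norm_smul_le_neg_div (φ : E →ₗ[ℝ] ℝ) {v : E} {c₁ c₂ : ℝ} (hc₁ : 0 < c₁)
    (hφ : φ v ≤ -c₁) (hv : ‖v‖ ≤ c₂) : φ (‖v‖⁻¹ • v) ≤ -(c₁ / c₂) := by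
  have v_pos : 0 < ‖v‖ := norm_pos_iff.2 (ne_zero_of_map (hφ.trans_lt (neg_neg_of_pos hc₁)).ne)
  calc φ (‖v‖⁻¹ • v) = φ v / ‖v‖ := by rw [map_smul, smul_eq_mul, inv_mul_eq_div]
    _ ≤ -c₁ / ‖v‖ := by gcongr
    _ = -(c₁ / ‖v‖) := neg_div _ _
    _ ≤ -(c₁ / c₂) := neg_le_neg (div_le_div_of_nonneg_left hc₁.le v_pos hv)

theorem incremental_tendsto_atBot_general {f : E → ℝ} {f' : E → E →L[ℝ] ℝ}
    (hf : ∀ z, HasFDerivAt f (f' z) z) (hf' : UniformContinuous f')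
    {x V : ℕ → E} {α : ℕ → ℝ} (hα : ∀ k, 0 ≤ α k) (hα0 : Tendsto α atTop (𝓝 0))
    (hαsum : Tendsto (fun N => ∑ k ∈ Finset.range N, α k) atTop atTop)
    {τ : ℕ → ℕ} {d : ℕ} (hτ_le : ∀ k, τ k ≤ k) (hle_τ : ∀ k, k ≤ τ k + d)
    (hupd : ∀ k, x (k + 1) = x k + α k • ‖V k‖⁻¹ • V k)
    {c₁ c₂ : ℝ} (hc₁ : 0 < c₁) (hdesc : ∀ k, f' (x (τ k)) (V k) ≤ -c₁) (hV : ∀ k, ‖V k‖ ≤ c₂) :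
    Tendsto (fun k => f (x k)) atTop atBot := by
  have hc₂ : 0 < c₂ :=
    have V_ne : V 0 ≠ 0 := ne_zero_of_map ((hdesc 0).trans_lt (neg_neg_of_pos hc₁)).ne
    (norm_pos_iff.2 V_ne).trans_le (hV 0)
  have hc : 0 < c₁ / c₂ / 2 := by positivity
  have step_eq : ∀ k, x (k + 1) - x k = α k • ‖V k‖⁻¹ • V k := fun k => by
    rw [hupd k, add_sub_cancel_left]
  have step_le : ∀ k, ‖x (k + 1) - x k‖ ≤ α k := fun k =>
    step_eq k ▸ norm_smul_inv_norm_smul_le (hα k) (V k)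
  have step_tendsto : Tendsto (fun k => dist (x k) (x (k + 1))) atTop (𝓝 0) :=
    squeeze_zero (fun _ => dist_nonneg) (fun k => dist_eq_norm_sub' (x k) _ ▸ step_le k) hα0
  have linearisation := isLittleO_sub_sub_of_uniformContinuous_hasFDerivAt hf hf'
    (tendsto_dist_of_bounded_delay step_tendsto hτ_le hle_τ) step_tendsto
  have decrease : ∀ᶠ k in atTop, f (x (k + 1)) ≤ f (x k) + -(c₁ / c₂ / 2) * α k := by
    filter_upwards [linearisation.bound hc] with k hk
    have slope_le : f' (x (τ k)) (x (k + 1) - x k) ≤ α k * -(c₁ / c₂) := by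
      rw [step_eq, map_smul, smul_eq_mul]
      exact mul_le_mul_of_nonneg_left
        (map_inv_norm_smul_le_neg_div (f' (x (τ k)) : E →ₗ[ℝ] ℝ) hc₁ (hdesc k) (hV k)) (hα k)
    have error_le := (Real.le_norm_self _).trans
      (hk.trans (mul_le_mul_of_nonneg_left (step_le k) hc.le))
    linarith
  refine tendsto_atBot_of_eventually_succ_le_add decrease ?_
  simpa only [← Finset.mul_sum] using hαsum.const_mul_atTop_of_neg (neg_neg_of_pos hc)

end NormedSpace

/-- Divergence of all objective values for the incremental central descent method when
the step sizes vanish but are not summable, gradient norms are bounded below by `c₁ > 0`,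
and the directions `V̂_k` are bounded by `c₂`: every `f_i(x_k) → -∞`. -/
theorem incremental_tendsto_atBot (n m : ℕ)
    (f : Fin m → EuclideanSpace ℝ (Fin n) → ℝ)
    (L : ℝ) (hL : 0 ≤ L)
    (hdiff : ∀ i, Differentiable ℝ (f i))
    (hlip : ∀ i, ∀ x y : EuclideanSpace ℝ (Fin n),
      ‖gradient (f i) x - gradient (f i) y‖ ≤ L * ‖x - y‖)
    (x : ℕ → EuclideanSpace ℝ (Fin n))
    (α : ℕ → ℝ) (hα : ∀ k, 0 < α k)
    (hα0 : Tendsto α atTop (𝓝 0))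
    (hαsum : Tendsto (fun N => ∑ k ∈ Finset.range N, α k) atTop atTop)
    (τ : Fin m → ℕ → ℕ)
    (hτ : ∀ i k, k - m ≤ τ i k ∧ τ i k ≤ k)
    (hgnz : ∀ i k, gradient (f i) (x (τ i k)) ≠ 0)
    (V : ℕ → EuclideanSpace ℝ (Fin n)) (hVnz : ∀ k, V k ≠ 0)
    (hfeas : ∀ i k, ⟪gradient (f i) (x (τ i k)), V k⟫ ≤ -‖gradient (f i) (x (τ i k))‖)
    (hupd : ∀ k, x (k + 1) = x k + α k • ‖V k‖⁻¹ • V k)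
    (c₁ : ℝ) (hc₁ : 0 < c₁)
    (hgrad : ∀ i k, c₁ ≤ ‖gradient (f i) (x k)‖)
    (c₂ : ℝ) (hc₂ : 0 < c₂)
    (hVbd : ∀ k, ‖V k‖ ≤ c₂) :
    ∀ i, Tendsto (fun k => f i (x k)) atTop atBot := by
  intro i
  have hgrad' : UniformContinuous (gradient (f i)) :=
    (LipschitzWith.of_dist_le' fun y z => by
      simpa only [dist_eq_norm] using hlip i y z).uniformContinuous
  exact incremental_tendsto_atBot_general (fun z => (hdiff i z).hasGradientAt.hasFDerivAt)
    ((InnerProductSpace.toDual ℝ _).isometry.uniformContinuous.comp hgrad')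
    (fun k => (hα k).le) hα0 hαsum (fun k => (hτ i k).2)
    (fun k => Nat.sub_le_iff_le_add.1 (hτ i k).1) hupd hc₁
    (fun k => (hfeas i k).trans (neg_le_neg (hgrad i (τ i k)))) hVbd
end

section
/- Let f_1,…,f_m : ℝⁿ → ℝ be differentiable with L-Lipschitz gradients. Let (x_k) ⊂ ℝⁿ, positive step sizes (α_k) with α_k → 0 and Σ_k α_k = ∞, indices τ(i,k) with k − m ≤ τ(i,k) ≤ k, stale gradients ĝ_{i,k} = ∇f_i(x_{τ(i,k)}) all nonzero, and V̂_k the minimum-norm element (assumed to exist) of {V : ⟨ĝ_{i,k}, V⟩ ≤ −‖ĝ_{i,k}‖ for all i}, with x_{k+1} = x_k + α_k·V̂_k/‖V̂_k‖ for all k. Then at least one of the following holds: (i) there is a subsequence (x_{k_j}) along which min_{i=1,…,m} ‖∇f_i(x_{k_j})‖ → 0; or (ii) there is a subsequence (x_{k_j}) along which the central descent directions diverge, in the sense that for every R > 0, for all sufficiently large j the set {V : ‖V‖ ≤ R and ⟨∇f_i(x_{k_j}), V⟩ ≤ −‖∇f_i(x_{k_j})‖ for all i} is empty; or (iii) f_i(x_k)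 → −∞ as k → ∞ for every i = 1,…,m. -/
open RealInnerProductSpace Filter Topology

/-!
Fix `ε > 0` bounding the current gradient norms from below, and `R > 0` bounding the norm of some
central descent direction from above, along the whole tail of the sequence; such `ε` and `R` exist
exactly when (i) and (ii) fail. Steps vanish and delays are bounded, so stale and current gradients
become uniformly close. Doubling a central descent direction of the current gradients then absorbs
the perturbation and gives a feasible vector for the stale ones, whence `‖V̂_k‖ ≤ 2R`. The unit
vector `V̂_k / ‖V̂_k‖` therefore has inner product at most `-‖ĝ_{i,k}‖ / (2R)` with each stale
gradient. Since gradients along the step are close to the stale ones, every objective eventually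
decreases by at least a fixed multiple of `α_k` per step, and `∑ α_k = ∞` forces (iii).
-/

section Sequences

lemma exists_subseq_tendsto_zero_or_eventually_ge {u : ℕ → ℝ} (hu : ∀ k, 0 ≤ u k) :
    (∃ φ : ℕ → ℕ, StrictMono φ ∧ Tendsto (u ∘ φ) atTop (𝓝 0)) ∨
      ∃ ε : ℝ, 0 < ε ∧ ∀ᶠ k in atTop, ε ≤ u k := by
  refine or_iff_not_imp_right.2 fun h => ?_
  have hfreq : ∀ j : ℕ, ∃ᶠ k in atTop, u k < 1 / ((j : ℝ) + 1) := fun j hj =>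
    h ⟨_, Nat.one_div_pos_of_nat, hj.mono fun _ => le_of_not_gt⟩
  obtain ⟨φ, hφ, hlt⟩ := extraction_forall_of_frequently hfreq
  exact ⟨φ, hφ, squeeze_zero (fun j => hu (φ j)) (fun j => (hlt j).le)
    tendsto_one_div_add_atTop_nhds_zero_nat⟩

lemma exists_subseq_norm_le_empty_or_eventually_exists_norm_le {E : Type*} [Norm E]
    (S : ℕ → Set E) :
    (∃ φ : ℕ → ℕ, StrictMono φ ∧
      ∀ R : ℝ, ∀ᶠ j in atTop, {W | ‖W‖ ≤ R ∧ W ∈ S (φ j)} = ∅) ∨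
      ∃ R : ℝ, 0 < R ∧ ∀ᶠ k in atTop, ∃ W ∈ S k, ‖W‖ ≤ R := by
  refine or_iff_not_imp_right.2 fun h => ?_
  have hfreq : ∀ j : ℕ, ∃ᶠ k in atTop, ∀ W ∈ S k, (j : ℝ) + 1 < ‖W‖ := fun j hj =>
    h ⟨_, j.cast_add_one_pos, hj.mono fun k hk => by simpa using hk⟩
  obtain ⟨φ, hφ, hlt⟩ := extraction_forall_of_frequently hfreq
  refine ⟨φ, hφ, fun R => ?_⟩
  filter_upwards [eventually_ge_atTop ⌈R⌉₊] with j hj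
  refine Set.eq_empty_of_forall_notMem fun W ⟨hWR, hW⟩ => ?_
  linarith [hlt j W hW, Nat.ceil_le.1 hj]

lemma tendsto_atBot_of_eventually_succ_le_sub {a b : ℕ → ℝ}
    (hab : ∀ᶠ k in atTop, a (k + 1) ≤ a k - b k)
    (hb : Tendsto (fun N => ∑ k ∈ Finset.range N, b k) atTop atTop) :
    Tendsto a atTop atBot := by
  obtain ⟨K, hK⟩ := eventually_atTop.1 hab
  have hbound : ∀ k, K ≤ k →
      a k ≤ (a K + ∑ j ∈ Finset.range K, b j) - ∑ j ∈ Finset.range k, b j := by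
    intro k hk
    induction k, hk using Nat.le_induction with
    | base => linarith
    | succ k hk ih =>
      rw [Finset.sum_range_succ]
      linarith [hK k hk]
  refine tendsto_atBot_mono' atTop (eventually_atTop.2 ⟨K, hbound⟩) ?_
  simp only [sub_eq_add_neg]
  exact tendsto_atBot_add_const_left _ _ (tendsto_neg_atTop_atBot.comp hb)

lemma eventually_forall_dist_lt_of_dist_succ_tendsto_zero {X : Type*} [PseudoMetricSpace X]
    {x : ℕ → X} (hx : Tendsto (fun k => dist (x k) (x (k + 1))) atTop (𝓝 0)) (D : ℕ)
    {δ : ℝ} (hδ : 0 < δ) :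
    ∀ᶠ k in atTop, ∀ l, k - D ≤ l → l ≤ k → dist (x l) (x k) < δ := by
  have hδD : 0 < δ / (D + 1) := by positivity
  obtain ⟨K, hK⟩ := eventually_atTop.1 (hx.eventually_le_const hδD)
  filter_upwards [eventually_ge_atTop (K + D)] with k hk l hDl hlk
  calc dist (x l) (x k)
      ≤ ∑ _j ∈ Finset.Ico l k, δ / (D + 1) :=
        dist_le_Ico_sum_of_dist_le hlk fun hlj _ => hK _ (by lia)
    _ = (k - l : ℕ) * (δ / (D + 1)) := by
        rw [Finset.sum_const, Nat.card_Ico, nsmul_eq_mul]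
    _ ≤ D * (δ / (D + 1)) := by
        gcongr
        lia
    _ < (D + 1) * (δ / (D + 1)) := by
        gcongr
        linarith
    _ = δ := by field_simp

end Sequences

section CentralDirections

variable {ι E : Type*} [NormedAddCommGroup E] [InnerProductSpace ℝ E]

/-- The central descent directions of a family of gradients `g`: the vectors whose slope along each
`g i` is at most `-‖g i‖`. The minimum-norm element is the direction used by the method. -/
def centralDirections (g : ι → E) : Set E :=
  {W | ∀ i, ⟪g i, W⟫ ≤ -‖g i‖}

lemma smul_mem_centralDirections_of_near {g h : ι → E} {W : E} {t η : ℝ} (ht : 0 ≤ t)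
    (hW : W ∈ centralDirections g) (hgh : ∀ i, ‖g i - h i‖ ≤ η)
    (hη : ∀ i, t * (η * (1 + ‖W‖)) ≤ (t - 1) * ‖h i‖) :
    t • W ∈ centralDirections h := by
  intro i
  have hnorm : ‖h i‖ ≤ ‖g i‖ + η := by
    linarith [norm_le_norm_add_norm_sub (g i) (h i), hgh i]
  have hinner : ⟪h i, W⟫ ≤ ⟪g i, W⟫ + η * ‖W‖ := by
    have hle : ⟪h i - g i, W⟫ ≤ η * ‖W‖ := (real_inner_le_norm _ _).trans <| by
      rw [norm_sub_rev]
      gcongr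
      exact hgh i
    rw [inner_sub_left] at hle
    linarith
  calc ⟪h i, t • W⟫ = t * ⟪h i, W⟫ := real_inner_smul_right _ _ _
    _ ≤ t * (η * (1 + ‖W‖) - ‖h i‖) := by
        gcongr
        linarith [hW i]
    _ ≤ -‖h i‖ := by linarith [hη i]

lemma inner_inv_norm_smul_le_neg_norm_div {h v : E} {B : ℝ} (hv : ⟪h, v⟫ ≤ -‖h‖)
    (hvB : ‖v‖ ≤ B) : ⟪h, ‖v‖⁻¹ • v⟫ ≤ -(‖h‖ / B) := by
  rcases eq_or_ne v 0 with rfl | hv0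
  · have hh : ‖h‖ = 0 := by
      rw [inner_zero_right] at hv
      linarith [norm_nonneg h]
    simp [hh]
  · have : 0 < ‖v‖ := norm_pos_iff.2 hv0
    calc ⟪h, ‖v‖⁻¹ • v⟫ = ⟪h, v⟫ / ‖v‖ := by
          rw [real_inner_smul_right, inv_mul_eq_div]
      _ ≤ -‖h‖ / ‖v‖ := by gcongr
      _ = -(‖h‖ / ‖v‖) := neg_div _ _
      _ ≤ -(‖h‖ / B) := by gcongr

end CentralDirections

section Descent

variable {ι E : Type*} [NormedAddCommGroup E] [InnerProductSpace ℝ E] [CompleteSpace E]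

lemma le_add_inner_add_of_gradient_near {f : E → ℝ} {x y g : E} {η : ℝ}
    (hf : ∀ z ∈ segment ℝ x y, DifferentiableAt ℝ f z)
    (hg : ∀ z ∈ segment ℝ x y, ‖gradient f z - g‖ ≤ η) :
    f y ≤ f x + ⟪g, y - x⟫ + η * ‖y - x‖ := by
  have hmean : ‖f y - f x - InnerProductSpace.toDual ℝ E g (y - x)‖ ≤ η * ‖y - x‖ :=
    (convex_segment x y).norm_image_sub_le_of_norm_hasFDerivWithin_le'
      (fun z hz => (hf z hz).hasGradientAt.hasFDerivAt.hasFDerivWithinAt)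
      (fun z hz => by simpa only [← map_sub, LinearIsometryEquiv.norm_map] using hg z hz)
      (left_mem_segment ℝ x y) (right_mem_segment ℝ x y)
  rw [InnerProductSpace.toDual_apply_apply, Real.norm_eq_abs] at hmean
  linarith [le_of_abs_le hmean]

lemma map_add_smul_le_of_gradient_near {f : E → ℝ} (hf : Differentiable ℝ f) {x u g : E}
    {a η s : ℝ} (ha : 0 ≤ a) (hu : ‖u‖ ≤ 1) (hgu : ⟪g, u⟫ ≤ -s)
    (hg : ∀ z ∈ Metric.closedBall x a, ‖gradient f z - g‖ ≤ η) :
    f (x + a • u) ≤ f x - (s - η) * a := by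
  have hη : 0 ≤ η := (norm_nonneg _).trans (hg x (Metric.mem_closedBall_self ha))
  have hau : ‖a • u‖ ≤ a := by
    rw [norm_smul, Real.norm_of_nonneg ha]
    exact mul_le_of_le_one_right ha hu
  have hsegment : segment ℝ x (x + a • u) ⊆ Metric.closedBall x a :=
    (convex_closedBall x a).segment_subset (Metric.mem_closedBall_self ha) (by simpa using hau)
  calc f (x + a • u)
      ≤ f x + ⟪g, a • u⟫ + η * ‖a • u‖ := by
        simpa only [add_sub_cancel_left] using
          le_add_inner_add_of_gradient_near (fun z _ => hf z) fun z hz => hg z (hsegment hz)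
    _ ≤ f x + a * -s + η * a := by
        rw [real_inner_smul_right]
        gcongr
    _ = f x - (s - η) * a := by ring

lemma eventually_gradient_near_delayed_gradient {f : ι → E → ℝ}
    (hgrad : UniformEquicontinuous fun i => gradient (f i)) {x : ℕ → E} {α : ℕ → ℝ}
    (hα0 : Tendsto α atTop (𝓝 0)) (hstep : ∀ k, dist (x k) (x (k + 1)) ≤ α k)
    {D : ℕ} {τ : ι → ℕ → ℕ} (hτ : ∀ i k, k - D ≤ τ i k ∧ τ i k ≤ k) {η : ℝ} (hη : 0 < η) :
    ∀ᶠ k in atTop, ∀ i, ∀ z ∈ Metric.closedBall (x k) (α k),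
      ‖gradient (f i) z - gradient (f i) (x (τ i k))‖ ≤ η := by
  obtain ⟨δ, hδ, hnear⟩ := Metric.uniformEquicontinuous_iff.1 hgrad η hη
  have hdelay := eventually_forall_dist_lt_of_dist_succ_tendsto_zero
    (squeeze_zero (fun _ => dist_nonneg) hstep hα0) D (half_pos hδ)
  filter_upwards [hα0.eventually_lt_const (half_pos hδ), hdelay] with k hαk hdelayk i z hz
  rw [← dist_eq_norm]
  refine (hnear z (x (τ i k)) ?_ i).le
  linarith [dist_triangle_right z (x (τ i k)) (x k), Metric.mem_closedBall.1 hz,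
    hdelayk (τ i k) (hτ i k).1 (hτ i k).2]

lemma map_add_central_step_le {f : ι → E → ℝ} (hdiff : ∀ i, Differentiable ℝ (f i))
    {x v W : E} {g : ι → E} {a ε R η : ℝ} (ha : 0 ≤ a) (hR : 0 < R)
    (hηε : η * (2 * R + 3) ≤ ε) (hε : ∀ i, ε ≤ ‖gradient (f i) x‖)
    (hW : W ∈ centralDirections fun i => gradient (f i) x) (hWR : ‖W‖ ≤ R)
    (hv : v ∈ centralDirections g) (hvmin : ∀ w ∈ centralDirections g, ‖v‖ ≤ ‖w‖)
    (hnear : ∀ i, ∀ z ∈ Metric.closedBall x a, ‖gradient (f i) z - g i‖ ≤ η) (i : ι) :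
    f i (x + a • ‖v‖⁻¹ • v) ≤ f i x - η / R * a := by
  have hnear_x : ∀ i, ‖gradient (f i) x - g i‖ ≤ η := fun i =>
    hnear i x (Metric.mem_closedBall_self ha)
  have hη : 0 ≤ η := (norm_nonneg _).trans (hnear_x i)
  -- The factor `2R + 3` is chosen so that this bound pays both for doubling `W` and for `η / R`.
  have hg : ∀ i, 2 * (η * (1 + R)) ≤ ‖g i‖ := fun i => by
    linarith [norm_sub_norm_le (gradient (f i) x) (g i), hnear_x i, hε i]
  have hv_le : ‖v‖ ≤ 2 * R := by
    have hdouble : (2 : ℝ) • W ∈ centralDirections g :=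
      smul_mem_centralDirections_of_near zero_le_two hW hnear_x fun i => by
        have : η * ‖W‖ ≤ η * R := by gcongr
        linarith [hg i]
    calc ‖v‖ ≤ ‖(2 : ℝ) • W‖ := hvmin _ hdouble
      _ = 2 * ‖W‖ := by rw [norm_smul, Real.norm_two]
      _ ≤ 2 * R := by gcongr
  have hslope : ⟪g i, ‖v‖⁻¹ • v⟫ ≤ -(η / R + η) :=
    calc ⟪g i, ‖v‖⁻¹ • v⟫ ≤ -(‖g i‖ / (2 * R)) :=
          inner_inv_norm_smul_le_neg_norm_div (hv i) hv_le
      _ ≤ -(2 * (η * (1 + R)) / (2 * R)) := by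
          gcongr
          exact hg i
      _ = -(η / R + η) := by field_simp
  simpa only [add_sub_cancel_right] using
    map_add_smul_le_of_gradient_near (hdiff i) ha
      (mem_closedBall_zero_iff.1 (inv_norm_smul_mem_unitClosedBall v)) hslope (hnear i)

theorem incremental_central_descent_global_general {f : ι → E → ℝ}
    (hdiff : ∀ i, Differentiable ℝ (f i))
    (hgrad : UniformEquicontinuous fun i => gradient (f i))
    {x : ℕ → E} {α : ℕ → ℝ} (hα : ∀ k, 0 ≤ α k) (hα0 : Tendsto α atTop (𝓝 0))
    (hαsum : Tendsto (fun N => ∑ k ∈ Finset.range N, α k) atTop atTop)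
    {D : ℕ} {τ : ι → ℕ → ℕ} (hτ : ∀ i k, k - D ≤ τ i k ∧ τ i k ≤ k) {V : ℕ → E}
    (hVmem : ∀ k, V k ∈ centralDirections fun i => gradient (f i) (x (τ i k)))
    (hVmin : ∀ k, ∀ w ∈ centralDirections fun i => gradient (f i) (x (τ i k)), ‖V k‖ ≤ ‖w‖)
    (hupd : ∀ k, x (k + 1) = x k + α k • ‖V k‖⁻¹ • V k) :
    (∃ φ : ℕ → ℕ, StrictMono φ ∧
      Tendsto (fun j => ⨅ i, ‖gradient (f i) (x (φ j))‖) atTop (𝓝 0)) ∨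
    (∃ φ : ℕ → ℕ, StrictMono φ ∧ ∀ R : ℝ, ∀ᶠ j in atTop,
      {W | ‖W‖ ≤ R ∧ W ∈ centralDirections fun i => gradient (f i) (x (φ j))} = ∅) ∨
    (∀ i, Tendsto (fun k => f i (x k)) atTop atBot) := by
  refine (exists_subseq_tendsto_zero_or_eventually_ge fun k =>
    Real.iInf_nonneg fun i => norm_nonneg (gradient (f i) (x k))).imp_right ?_
  rintro ⟨ε, hε, hgrad_ge⟩
  refine (exists_subseq_norm_le_empty_or_eventually_exists_norm_le fun k =>
    centralDirections fun i => gradient (f i) (x k)).imp_right ?_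
  rintro ⟨R, hR, hW⟩ i
  obtain ⟨η, hη, hηε⟩ : ∃ η : ℝ, 0 < η ∧ η * (2 * R + 3) = ε :=
    ⟨ε / (2 * R + 3), by positivity, by field_simp⟩
  have hstep : ∀ k, dist (x k) (x (k + 1)) ≤ α k := fun k => by
    rw [hupd, dist_self_add_right, norm_smul, Real.norm_of_nonneg (hα k)]
    exact mul_le_of_le_one_right (hα k)
      (mem_closedBall_zero_iff.1 (inv_norm_smul_mem_unitClosedBall (V k)))
  have hdecrease : ∀ᶠ k in atTop, f i (x (k + 1)) ≤ f i (x k) - η / R * α k := by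
    filter_upwards [hgrad_ge, hW, eventually_gradient_near_delayed_gradient hgrad hα0 hstep hτ hη]
      with k hεk ⟨W, hWk, hWR⟩ hnear
    have hεk' : ∀ i, ε ≤ ‖gradient (f i) (x k)‖ := fun i =>
      hεk.trans (ciInf_le ⟨0, Set.forall_mem_range.2 fun _ => norm_nonneg _⟩ i)
    rw [hupd]
    exact map_add_central_step_le hdiff (hα k) hR hηε.le hεk' hWk hWR (hVmem k) (hVmin k)
      hnear i
  refine tendsto_atBot_of_eventually_succ_le_sub hdecrease ?_
  simpa only [Finset.mul_sum] using hαsum.const_mul_atTop (div_pos hη hR)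

end Descent

/-- Global guarantee of the incremental central descent method (Theorem 3.4): with
vanishing, non-summable step sizes and `V̂_k` the minimum-norm element of the stale
feasible set, either (i) some subsequence has `min_i ‖∇f_i(x_{k_j})‖ → 0`, or (ii) some
subsequence has diverging central descent directions (for every radius `R`, the feasible
set intersected with the ball of radius `R` is eventually empty), or (iii) all objective
values tend to `-∞`. -/
theorem incremental_central_descent_global (n m : ℕ) (hm : 0 < m)
    (f : Fin m → EuclideanSpace ℝ (Fin n) → ℝ)
    (L : ℝ) (hL : 0 ≤ L)
    (hdiff : ∀ i, Differentiable ℝ (f i))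
    (hlip : ∀ i, ∀ x y : EuclideanSpace ℝ (Fin n),
      ‖gradient (f i) x - gradient (f i) y‖ ≤ L * ‖x - y‖)
    (x : ℕ → EuclideanSpace ℝ (Fin n))
    (α : ℕ → ℝ) (hα : ∀ k, 0 < α k)
    (hα0 : Tendsto α atTop (𝓝 0))
    (hαsum : Tendsto (fun N => ∑ k ∈ Finset.range N, α k) atTop atTop)
    (τ : Fin m → ℕ → ℕ)
    (hτ : ∀ i k, k - m ≤ τ i k ∧ τ i k ≤ k)
    (hgnz : ∀ i k, gradient (f i) (x (τ i k)) ≠ 0)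
    (V : ℕ → EuclideanSpace ℝ (Fin n))
    (hVmem : ∀ k i, ⟪gradient (f i) (x (τ i k)), V k⟫ ≤ -‖gradient (f i) (x (τ i k))‖)
    (hVmin : ∀ k, ∀ w : EuclideanSpace ℝ (Fin n),
      (∀ i, ⟪gradient (f i) (x (τ i k)), w⟫ ≤ -‖gradient (f i) (x (τ i k))‖) →
      ‖V k‖ ≤ ‖w‖)
    (hupd : ∀ k, x (k + 1) = x k + α k • ‖V k‖⁻¹ • V k) :
    (∃ φ : ℕ → ℕ, StrictMono φ ∧
       Tendsto (fun j => Finset.univ.inf' ⟨⟨0, hm⟩, Finset.mem_univ _⟩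
         (fun i => ‖gradient (f i) (x (φ j))‖)) atTop (𝓝 0)) ∨
    (∃ φ : ℕ → ℕ, StrictMono φ ∧
       ∀ R : ℝ, 0 < R → ∀ᶠ j in atTop,
         {W : EuclideanSpace ℝ (Fin n) | ‖W‖ ≤ R ∧
           ∀ i, ⟪gradient (f i) (x (φ j)), W⟫ ≤ -‖gradient (f i) (x (φ j))‖} = ∅) ∨
    (∀ i, Tendsto (fun k => f i (x k)) atTop atBot) := by
  have hgrad : UniformEquicontinuous fun i => gradient (f i) :=
    LipschitzWith.uniformEquicontinuous _ L.toNNReal fun i =>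
      .of_dist_le' fun y z => by simpa only [dist_eq_norm] using hlip i y z
  have : Nonempty (Fin m) := ⟨⟨0, hm⟩⟩
  simp only [Finset.inf'_univ_eq_ciInf]
  exact (incremental_central_descent_global_general hdiff hgrad (fun k => (hα k).le) hα0 hαsum hτ
    hVmem hVmin hupd).imp_right <| Or.imp_left fun ⟨φ, hφ, hempty⟩ => ⟨φ, hφ, fun R _ => hempty R⟩
end

section
/- Let f : ℝⁿ → ℝ be differentiable with L-Lipschitz gradient (L > 0), let x ∈ ℝⁿ with g = ∇f(x) ≠ 0, let β ∈ (0,1), and let V̂ ∈ ℝⁿ satisfy ⟨g, V̂⟩ ≤ −‖g‖ (so V̂ ≠ 0). Let l* be the smallest nonnegative integer l such that f(x + (1/2)^l·V̂/‖V̂‖) − f(x) ≤ β·(1/2)^l·⟨g, V̂⟩/‖V̂‖ (such l exists), and set α = (1/2)^{l*}. Then α ≥ min{ (1−β)·‖g‖ / (2L·‖V̂‖), 1 }. -/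
open RealInnerProductSpace Filter Topology

/-
The Lipschitz bound makes the first-order prediction of `f (x + t • u)` accurate up to
`L / 2 * ‖t • u‖ ^ 2`, and for small `t` this error is at most the share `1 - β` of the predicted
decrease that the Armijo condition gives away. Hence every step up to an explicit threshold is
accepted. If backtracking occurs, the step just before the accepted one was rejected, so it exceeds
the threshold, and the accepted step is half of it.
-/

section Taylor

variable {E F : Type*} [NormedAddCommGroup E] [NormedSpace ℝ E]
  [NormedAddCommGroup F] [NormedSpace ℝ F]

theorem norm_image_sub_sub_le_sq_of_hasFDerivAt {f : E → F} {f' : E → E →L[ℝ] F} {x y : E} {L : ℝ}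
    (hf : ∀ z ∈ segment ℝ x y, HasFDerivAt f (f' z) z)
    (hlip : ∀ z ∈ segment ℝ x y, ‖f' z - f' x‖ ≤ L * ‖z - x‖) :
    ‖f y - f x - f' x (y - x)‖ ≤ L / 2 * ‖y - x‖ ^ 2 := by
  let γ : ℝ → E := AffineMap.lineMap x y
  have hγ_mem : ∀ t ∈ Set.Icc (0 : ℝ) 1, γ t ∈ segment ℝ x y := fun t ht =>
    segment_eq_image_lineMap ℝ x y ▸ Set.mem_image_of_mem _ ht
  have hγ_sub (t : ℝ) : γ t - x = t • (y - x) := AffineMap.lineMap_vsub_left x y t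
  let remainder : ℝ → F := fun t => f (γ t) - f x - f' x (γ t - x)
  have h_remainder : ∀ t ∈ Set.Icc (0 : ℝ) 1,
      HasDerivAt remainder ((f' (γ t) - f' x) (y - x)) t := fun t ht => by
    have hγ : HasDerivAt γ (y - x) t := AffineMap.hasDerivAt_lineMap
    exact (((hf _ (hγ_mem t ht)).comp_hasDerivAt t hγ).sub_const (f x)).sub
      ((f' x).hasFDerivAt.comp_hasDerivAt t (hγ.sub_const x))
  have h_bound (t : ℝ) :
      HasDerivAt (fun t => L / 2 * ‖y - x‖ ^ 2 * t ^ 2) (L * t * ‖y - x‖ ^ 2) t :=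
    ((hasDerivAt_pow 2 t).const_mul _).congr_deriv (by ring)
  have h_deriv_le : ∀ t ∈ Set.Ico (0 : ℝ) 1,
      ‖(f' (γ t) - f' x) (y - x)‖ ≤ L * t * ‖y - x‖ ^ 2 := fun t ht =>
    calc ‖(f' (γ t) - f' x) (y - x)‖
        ≤ L * ‖γ t - x‖ * ‖y - x‖ :=
          (f' (γ t) - f' x).le_of_opNorm_le (hlip _ (hγ_mem t ⟨ht.1, ht.2.le⟩)) _
      _ = L * t * ‖y - x‖ ^ 2 := by
          rw [hγ_sub, norm_smul, Real.norm_of_nonneg ht.1]; ring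
  have h_le := image_norm_le_of_norm_deriv_right_le_deriv_boundary
    (fun t ht => (h_remainder t ht).continuousAt.continuousWithinAt)
    (fun t ht => (h_remainder t ⟨ht.1, ht.2.le⟩).hasDerivWithinAt)
    (by simp [remainder, γ]) h_bound h_deriv_le (Set.right_mem_Icc.2 zero_le_one)
  simpa [remainder, γ] using h_le

end Taylor

theorem min_mul_le_pow_of_forall_lt_not {R : Type*} [Semiring R] [LinearOrder R]
    [IsStrictOrderedRing R] {P : R → Prop} {ρ T : R} (hρ : 0 < ρ)
    (hP : ∀ t, 0 < t → t ≤ T → P t) {l : ℕ} (hl : ∀ k < l, ¬ P (ρ ^ k)) :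
    min (ρ * T) 1 ≤ ρ ^ l := by
  rcases l with _ | k
  · simp
  · have hT : T < ρ ^ k := not_le.1 fun h => hl k k.lt_succ_self (hP _ (pow_pos hρ k) h)
    calc min (ρ * T) 1 ≤ ρ * T := min_le_left _ _
      _ ≤ ρ * ρ ^ k := by gcongr
      _ = ρ ^ (k + 1) := (pow_succ' ρ k).symm

section Armijo

variable {E : Type*} [NormedAddCommGroup E] [NormedSpace ℝ E]

/-- The Armijo sufficient-decrease condition with parameter `β` for the step of length `t` from `x`
along `u`. The functional `φ` stands for the derivative of `f` at `x`, and `u` need not be a unit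
vector. -/
def ArmijoCondition (f : E → ℝ) (φ : E →L[ℝ] ℝ) (β : ℝ) (x u : E) (t : ℝ) : Prop :=
  f (x + t • u) - f x ≤ β * t * φ u

variable {f : E → ℝ} {f' : E → E →L[ℝ] ℝ} {x : E} {L β : ℝ}

theorem armijoCondition_of_mul_sq_norm_le (hf : ∀ z, HasFDerivAt f (f' z) z)
    (hlip : ∀ z, ‖f' z - f' x‖ ≤ L * ‖z - x‖) {u : E} {t : ℝ} (ht : 0 ≤ t)
    (h : t * (L * ‖u‖ ^ 2) ≤ 2 * (1 - β) * -f' x u) :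
    ArmijoCondition f (f' x) β x u t := by
  have h_taylor : f (x + t • u) - f x - t * f' x u ≤ L / 2 * (t * ‖u‖) ^ 2 := by
    simpa [norm_smul, abs_of_nonneg ht] using (le_abs_self _).trans
      (norm_image_sub_sub_le_sq_of_hasFDerivAt (y := x + t • u) (fun z _ => hf z) fun z _ => hlip z)
  calc f (x + t • u) - f x
      ≤ t * f' x u + t / 2 * (t * (L * ‖u‖ ^ 2)) := by linarith
    _ ≤ t * f' x u + t / 2 * (2 * (1 - β) * -f' x u) := by gcongr
    _ = β * t * f' x u := by ring

theorem min_le_pow_of_forall_lt_not_armijoCondition (hf : ∀ z, HasFDerivAt f (f' z) z)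
    (hL : 0 < L) (hlip : ∀ z, ‖f' z - f' x‖ ≤ L * ‖z - x‖) {u : E} (hu : u ≠ 0)
    {ρ : ℝ} (hρ : 0 < ρ) {l : ℕ} (hl : ∀ k < l, ¬ ArmijoCondition f (f' x) β x u (ρ ^ k)) :
    min (ρ * (2 * (1 - β) * -f' x u / (L * ‖u‖ ^ 2))) 1 ≤ ρ ^ l :=
  min_mul_le_pow_of_forall_lt_not hρ (fun _ ht h =>
    armijoCondition_of_mul_sq_norm_le hf hlip ht.le ((le_div_iff₀ (by positivity)).1 h)) hl

theorem armijo_step_lower_bound_general (hf : ∀ z, HasFDerivAt f (f' z) z) (hL : 0 < L)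
    (hlip : ∀ z, ‖f' z - f' x‖ ≤ L * ‖z - x‖) (hx : f' x ≠ 0) (hβ : β ≤ 1) {V : E}
    (hV : f' x V ≤ -‖f' x‖) {l : ℕ}
    (hl : ∀ k < l, ¬ ArmijoCondition f (f' x) β x (‖V‖⁻¹ • V) ((1 / 2) ^ k)) :
    min ((1 - β) * ‖f' x‖ / (2 * L * ‖V‖)) 1 ≤ (1 / 2) ^ l := by
  have hV₀ : V ≠ 0 := by
    rintro rfl
    exact hx (by simpa using hV)
  have hβ' : 0 ≤ 1 - β := sub_nonneg.2 hβ
  have hu_norm : ‖‖V‖⁻¹ • V‖ = 1 := norm_smul_inv_norm (𝕜 := ℝ) hV₀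
  have h_slope : ‖f' x‖ / ‖V‖ ≤ -f' x (‖V‖⁻¹ • V) := by
    rw [map_smul, smul_eq_mul, ← mul_neg, div_eq_inv_mul]
    gcongr
    exact le_neg_of_le_neg hV
  refine (min_le_min_right 1 ?_).trans <| min_le_pow_of_forall_lt_not_armijoCondition hf hL hlip
    (norm_ne_zero_iff.1 (hu_norm ▸ one_ne_zero)) one_half_pos hl
  calc (1 - β) * ‖f' x‖ / (2 * L * ‖V‖)
      = 1 / 2 * ((1 - β) * (‖f' x‖ / ‖V‖) / L) := by field_simp
    _ ≤ 1 / 2 * (2 * (1 - β) * -f' x (‖V‖⁻¹ • V) / (L * ‖‖V‖⁻¹ • V‖ ^ 2)) := by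
      rw [hu_norm, one_pow, mul_one]
      gcongr
      exact le_mul_of_one_le_left hβ' one_le_two

end Armijo

/-- Lower bound for the Armijo backtracking step size along the normalized direction
`V̂/‖V̂‖`: the accepted step `α = (1/2)^{l*}` satisfies
`α ≥ min{(1-β)‖g‖/(2L‖V̂‖), 1}`. -/
theorem armijo_step_lower_bound (n : ℕ)
    (f : EuclideanSpace ℝ (Fin n) → ℝ)
    (hdiff : Differentiable ℝ f)
    (L : ℝ) (hL : 0 < L)
    (hlip : ∀ x y : EuclideanSpace ℝ (Fin n),
      ‖gradient f x - gradient f y‖ ≤ L * ‖x - y‖)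
    (x : EuclideanSpace ℝ (Fin n)) (hg : gradient f x ≠ 0)
    (β : ℝ) (hβ₀ : 0 < β) (hβ₁ : β < 1)
    (V : EuclideanSpace ℝ (Fin n))
    (hfeas : ⟪gradient f x, V⟫ ≤ -‖gradient f x‖)
    (l : ℕ)
    (hl : f (x + ((1 / 2 : ℝ)) ^ l • ‖V‖⁻¹ • V) - f x ≤
      β * (1 / 2 : ℝ) ^ l * (⟪gradient f x, V⟫ / ‖V‖))
    (hlmin : ∀ l' : ℕ, l' < l →
      ¬ (f (x + ((1 / 2 : ℝ)) ^ l' • ‖V‖⁻¹ • V) - f x ≤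
        β * (1 / 2 : ℝ) ^ l' * (⟪gradient f x, V⟫ / ‖V‖))) :
    min ((1 - β) * ‖gradient f x‖ / (2 * L * ‖V‖)) 1 ≤ (1 / 2 : ℝ) ^ l := by
  let gradDual := fun z => InnerProductSpace.toDual ℝ _ (gradient f z)
  have h_norm : ‖gradDual x‖ = ‖gradient f x‖ := LinearIsometryEquiv.norm_map _ _
  rw [← h_norm] at hfeas ⊢
  refine armijo_step_lower_bound_general (f' := gradDual)
    (fun z => (hdiff z).hasGradientAt.hasFDerivAt) hL (fun z => ?_)
    ((LinearIsometryEquiv.map_eq_zero_iff _).not.2 hg) hβ₁.le hfeas fun k hk => ?_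
  · simpa only [gradDual, ← map_sub, LinearIsometryEquiv.norm_map] using hlip z x
  · simpa only [ArmijoCondition, gradDual, InnerProductSpace.toDual_apply_apply,
      inner_smul_right_eq_smul, smul_eq_mul, div_eq_inv_mul] using hlmin k hk
end

section
/- Let f_1,…,f_m : ℝⁿ → ℝ be differentiable with L-Lipschitz gradients (L > 0) and let β ∈ (0,1). Let (x_k) ⊂ ℝⁿ, indices j(k) ∈ {1,…,m}, positive step sizes (α_k), and nonzero vectors V̂_k satisfy, for every k: (a) x_{k+1} = x_k + α_k·V̂_k/‖V̂_k‖; (b) the Armijo condition f_{j(k)}(x_{k+1}) − f_{j(k)}(x_k) ≤ β·α_k·⟨∇f_{j(k)}(x_k), V̂_k⟩/‖V̂_k‖; (c) the central-direction feasibility ⟨∇f_{j(k)}(x_k), V̂_k⟩ ≤ −‖∇f_{j(k)}(x_k)‖; (d) the step lower bound α_k ≥ min{(1−β)/(2L), 1}·‖∇f_{j(k)}(x_k)‖/‖V̂_k‖; and (e) the linkage f_{j(k+1)}(x_{k+1}) ≤ f_{j(k)}(x_{k+1}). Then for every k: f_{j(k)}(x_k) − f_{j(k+1)}(x_{k+1})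 ≥ min{ β(1−β)/(2L), β } · ( min_{t=1,…,m} ‖∇f_t(x_k)‖ )² / ‖V̂_k‖². -/
open RealInnerProductSpace Filter Topology

/-!
The Armijo condition bounds the decrease of the active function below by `-β α s`, where `s` is its
slope along the unit direction `V / ‖V‖`. Feasibility makes this slope at most `-q`, with
`q = ‖∇f_j(x)‖ / ‖V‖`, and the step lower bound `α ≥ c q` contributes a second factor `q`, so the
decrease is at least `β c q²`. Linkage passes this on to the next active function, and `‖∇f_j(x)‖`
dominates the minimal gradient norm.
-/

lemma mul_sq_le_sub_of_armijo {R : Type*} [CommRing R] [PartialOrder R] [IsOrderedRing R]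
    {a b β c α s q : R} (hβ : 0 ≤ β) (hc : 0 ≤ c) (hq : 0 ≤ q)
    (harmijo : b - a ≤ β * α * s) (hslope : s ≤ -q) (hstep : c * q ≤ α) :
    β * c * q ^ 2 ≤ a - b := by
  have hα : 0 ≤ α := (mul_nonneg hc hq).trans hstep
  calc β * c * q ^ 2 = β * (c * q) * q := by ring
    _ ≤ β * α * q := by gcongr
    _ = -(β * α * -q) := by ring
    _ ≤ -(β * α * s) := by gcongr
    _ ≤ -(b - a) := by gcongr
    _ = a - b := neg_sub b a

lemma sq_norm_div_norm_le_sub_of_armijo {E : Type*} [NormedAddCommGroup E] [InnerProductSpace ℝ E]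
    {a b β c α : ℝ} {g v : E} (hβ : 0 ≤ β) (hc : 0 ≤ c)
    (harmijo : b - a ≤ β * α * (⟪g, v⟫ / ‖v‖)) (hfeas : ⟪g, v⟫ ≤ -‖g‖)
    (hstep : c * (‖g‖ / ‖v‖) ≤ α) :
    β * c * (‖g‖ / ‖v‖) ^ 2 ≤ a - b := by
  have hslope : ⟪g, v⟫ / ‖v‖ ≤ -(‖g‖ / ‖v‖) := by
    rw [← neg_div]
    gcongr
  exact mul_sq_le_sub_of_armijo hβ hc (by positivity) harmijo hslope hstep

theorem incremental_armijo_iteration_decrease_general {ι E : Type*} [NormedAddCommGroup E]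
    [InnerProductSpace ℝ E] [CompleteSpace E] {f : ι → E → ℝ} {x x' V : E} {j j' : ι}
    {β c α : ℝ} (hdiff : ∀ i, DifferentiableAt ℝ (f i) x) (hβ : 0 ≤ β) (hc : 0 ≤ c) (hV : V ≠ 0)
    (harmijo : f j x' - f j x ≤ β * α * (⟪gradient (f j) x, V⟫ / ‖V‖))
    (hfeas : ⟪gradient (f j) x, V⟫ ≤ -‖gradient (f j) x‖)
    (hstep : c * (‖gradient (f j) x‖ / ‖V‖) ≤ α)
    (hlink : f j' x' ≤ f j x') :
    β * c * (⨅ i, ‖gradient (f i) x‖) ^ 2 / ‖V‖ ^ 2 ≤ f j x - f j' x' := by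
  have hinf_nonneg : 0 ≤ ⨅ i, ‖gradient (f i) x‖ := Real.iInf_nonneg fun _ => norm_nonneg _
  have hinf_le : ⨅ i, ‖gradient (f i) x‖ ≤ ‖gradient (f j) x‖ :=
    ciInf_le ⟨0, Set.forall_mem_range.2 fun _ => norm_nonneg _⟩ j
  calc β * c * (⨅ i, ‖gradient (f i) x‖) ^ 2 / ‖V‖ ^ 2
      = β * c * ((⨅ i, ‖gradient (f i) x‖) / ‖V‖) ^ 2 := by rw [div_pow, mul_div_assoc]
    _ ≤ β * c * (‖gradient (f j) x‖ / ‖V‖) ^ 2 := by gcongr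
    _ ≤ f j x - f j x' := sq_norm_div_norm_le_sub_of_armijo hβ hc harmijo hfeas hstep
    _ ≤ f j x - f j' x' := by gcongr

/-- Per-iteration decrease of the incremental central descent method with inexact
(Armijo) line search:
`f_{j(k)}(x_k) - f_{j(k+1)}(x_{k+1}) ≥ min{β(1-β)/(2L), β} (min_t ‖∇f_t(x_k)‖)² / ‖V̂_k‖²`. -/
theorem incremental_armijo_iteration_decrease (n m : ℕ)
    (f : Fin m → EuclideanSpace ℝ (Fin n) → ℝ)
    (L : ℝ) (hL : 0 < L)
    (hdiff : ∀ i, Differentiable ℝ (f i))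
    (hlip : ∀ i, ∀ x y : EuclideanSpace ℝ (Fin n),
      ‖gradient (f i) x - gradient (f i) y‖ ≤ L * ‖x - y‖)
    (β : ℝ) (hβ₀ : 0 < β) (hβ₁ : β < 1)
    (x : ℕ → EuclideanSpace ℝ (Fin n)) (j : ℕ → Fin m)
    (α : ℕ → ℝ) (hα : ∀ k, 0 < α k)
    (V : ℕ → EuclideanSpace ℝ (Fin n)) (hVnz : ∀ k, V k ≠ 0)
    (hupd : ∀ k, x (k + 1) = x k + α k • ‖V k‖⁻¹ • V k)
    (harmijo : ∀ k, f (j k) (x (k + 1)) - f (j k) (x k) ≤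
      β * α k * (⟪gradient (f (j k)) (x k), V k⟫ / ‖V k‖))
    (hfeas : ∀ k, ⟪gradient (f (j k)) (x k), V k⟫ ≤ -‖gradient (f (j k)) (x k)‖)
    (hstep : ∀ k, min ((1 - β) / (2 * L)) 1 * (‖gradient (f (j k)) (x k)‖ / ‖V k‖) ≤ α k)
    (hlink : ∀ k, f (j (k + 1)) (x (k + 1)) ≤ f (j k) (x (k + 1))) :
    ∀ k, f (j k) (x k) - f (j (k + 1)) (x (k + 1)) ≥
      min (β * (1 - β) / (2 * L)) β *
        (Finset.univ.inf' ⟨j k, Finset.mem_univ _⟩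
          (fun t => ‖gradient (f t) (x k)‖)) ^ 2 / ‖V k‖ ^ 2 := by
  intro k
  have : Nonempty (Fin m) := ⟨j k⟩
  have hc : 0 ≤ min ((1 - β) / (2 * L)) 1 := by have := sub_pos.2 hβ₁; positivity
  simpa only [Finset.inf'_univ_eq_ciInf, ge_iff_le, mul_min_of_nonneg _ _ hβ₀.le, mul_one,
    mul_div_assoc] using incremental_armijo_iteration_decrease_general (fun i => hdiff i (x k))
      hβ₀.le hc (hVnz k) (harmijo k) (hfeas k) (hstep k) (hlink k)
end

section
/- Let f_1,…,f_m : ℝⁿ → ℝ be differentiable with L-Lipschitz gradients (L > 0), all bounded from below by a common constant f^min, and let β ∈ (0,1). Let (x_k)_{k≥0} ⊂ ℝⁿ, indices j(k) ∈ {1,…,m} with j(0) = 1, positive step sizes (α_k), and nonzero vectors V̂_k satisfy, for every k: (a) x_{k+1} = x_k + α_k·V̂_k/‖V̂_k‖; (b) the Armijo condition f_{j(k)}(x_{k+1}) − f_{j(k)}(x_k) ≤ β·α_k·⟨∇f_{j(k)}(x_k), V̂_k⟩/‖V̂_k‖; (c) the central-direction feasibility ⟨∇f_{j(k)}(x_k),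 V̂_k⟩ ≤ −‖∇f_{j(k)}(x_k)‖; (d) the step lower bound α_k ≥ min{(1−β)/(2L), 1}·‖∇f_{j(k)}(x_k)‖/‖V̂_k‖; and (e) the linkage f_{j(k+1)}(x_{k+1}) ≤ f_{j(k)}(x_{k+1}). Then for every k ≥ 1: min_{0 ≤ l ≤ k−1} ( min_{t=1,…,m} ‖∇f_t(x_l)‖ / ‖V̂_l‖ ) ≤ sqrt( (1/k) · ( f_1(x_0) − f^min ) / min{ β(1−β)/(2L), β } ). -/
open RealInnerProductSpace Filter Topology

/-!
The Armijo condition at a central direction, with the lower bound on the step, decreases the active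
objective by a multiple of the squared ratio `(‖∇f_{j(k)}(x_k)‖ / ‖V_k‖)²`. Changing the active
index never increases the active value, so these decreases telescope along `k ↦ f_{j(k)}(x_k)`;
since that sequence is bounded below, the smallest squared ratio is at most their average.
-/

theorem exists_le_average_decrease {K : Type*} [Field K] [LinearOrder K] [IsStrictOrderedRing K]
    {a b : ℕ → K} {n : ℕ} (hn : 0 < n) (hdec : ∀ i < n, a (i + 1) + b i ≤ a i) :
    ∃ i < n, b i ≤ (a 0 - a n) / n := by
  have hn' : (n : K) ≠ 0 := Nat.cast_ne_zero.mpr hn.ne'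
  have hsum : ∑ i ∈ Finset.range n, b i ≤ ∑ _i ∈ Finset.range n, (a 0 - a n) / n :=
    calc ∑ i ∈ Finset.range n, b i
        ≤ ∑ i ∈ Finset.range n, (a i - a (i + 1)) :=
          Finset.sum_le_sum fun i hi ↦ le_sub_iff_add_le'.mpr (hdec i (Finset.mem_range.mp hi))
      _ = a 0 - a n := Finset.sum_range_sub' a n
      _ = ∑ _i ∈ Finset.range n, (a 0 - a n) / n := by
          rw [Finset.sum_const, Finset.card_range, nsmul_eq_mul, mul_div_cancel₀ _ hn']
  obtain ⟨i, hi, hle⟩ :=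
    Finset.exists_le_of_sum_le (Finset.nonempty_range_iff.mpr hn.ne') hsum
  exact ⟨i, Finset.mem_range.mp hi, hle⟩

theorem exists_le_sqrt_of_quadratic_decrease {a r : ℕ → ℝ} {c lower : ℝ} {n : ℕ}
    (hc : 0 < c) (hn : 0 < n) (hdec : ∀ i < n, a (i + 1) + c * r i ^ 2 ≤ a i)
    (hlower : lower ≤ a n) :
    ∃ i < n, r i ≤ √(1 / n * ((a 0 - lower) / c)) := by
  obtain ⟨i, hi, hle⟩ := exists_le_average_decrease hn hdec
  refine ⟨i, hi, Real.le_sqrt_of_sq_le ?_⟩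
  calc r i ^ 2
      ≤ (a 0 - a n) / n / c := (le_div_iff₀' hc).mpr hle
    _ ≤ (a 0 - lower) / n / c := by gcongr
    _ = 1 / n * ((a 0 - lower) / c) := by ring

theorem inf'_inf'_div_le {κ ι K : Type*} [Field K] [LinearOrder K] [IsStrictOrderedRing K]
    {s : Finset κ} {u : Finset ι} (hs : s.Nonempty) (hu : u.Nonempty) (φ : ι → κ → K) {w : κ → K}
    {l : κ} {t : ι} (hl : l ∈ s) (ht : t ∈ u) (hw : 0 ≤ w l) :
    s.inf' hs (fun l ↦ u.inf' hu (fun t ↦ φ t l) / w l) ≤ φ t l / w l :=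
  (Finset.inf'_le _ hl).trans
    (div_le_div_of_nonneg_right (Finset.inf'_le (fun t ↦ φ t l) ht) hw)

section InnerProductSpace

variable {E : Type*} [NormedAddCommGroup E] [InnerProductSpace ℝ E]

theorem armijo_bound_le_neg_sq {g v : E} {α β c : ℝ} (hβ : 0 ≤ β) (hc : 0 ≤ c)
    (hfeas : ⟪g, v⟫ ≤ -‖g‖) (hstep : c * (‖g‖ / ‖v‖) ≤ α) :
    β * α * (⟪g, v⟫ / ‖v‖) ≤ -(β * c * (‖g‖ / ‖v‖) ^ 2) := by
  have hα : 0 ≤ α := le_trans (by positivity) hstep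
  calc β * α * (⟪g, v⟫ / ‖v‖)
      ≤ β * α * (-‖g‖ / ‖v‖) := by gcongr
    _ = -(β * α * (‖g‖ / ‖v‖)) := by ring
    _ ≤ -(β * (c * (‖g‖ / ‖v‖)) * (‖g‖ / ‖v‖)) := by gcongr
    _ = -(β * c * (‖g‖ / ‖v‖) ^ 2) := by ring

theorem incremental_armijo_rate_general [CompleteSpace E] {ι : Type*} {f : ι → E → ℝ}
    {x V : ℕ → E} {j : ℕ → ι} {α : ℕ → ℝ} {β c fmin : ℝ} (hβ : 0 < β) (hc : 0 < c)
    (hdiff : ∀ k, DifferentiableAt ℝ (f (j k)) (x k)) (hV : ∀ k, V k ≠ 0)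
    (hbdd : ∀ k, fmin ≤ f (j k) (x k))
    (harmijo : ∀ k, f (j k) (x (k + 1)) - f (j k) (x k) ≤
      β * α k * (⟪gradient (f (j k)) (x k), V k⟫ / ‖V k‖))
    (hfeas : ∀ k, ⟪gradient (f (j k)) (x k), V k⟫ ≤ -‖gradient (f (j k)) (x k)‖)
    (hstep : ∀ k, c * (‖gradient (f (j k)) (x k)‖ / ‖V k‖) ≤ α k)
    (hlink : ∀ k, f (j (k + 1)) (x (k + 1)) ≤ f (j k) (x (k + 1))) {k : ℕ} (hk : 0 < k) :
    ∃ l < k, ‖gradient (f (j l)) (x l)‖ / ‖V l‖ ≤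
      √(1 / k * ((f (j 0) (x 0) - fmin) / (β * c))) := by
  have hdec (l : ℕ) : f (j (l + 1)) (x (l + 1)) +
      β * c * (‖gradient (f (j l)) (x l)‖ / ‖V l‖) ^ 2 ≤ f (j l) (x l) := by
    linarith [hlink l, harmijo l, armijo_bound_le_neg_sq hβ.le hc.le (hfeas l) (hstep l)]
  exact exists_le_sqrt_of_quadratic_decrease (a := fun l ↦ f (j l) (x l)) (mul_pos hβ hc) hk
    (fun l _ ↦ hdec l) (hbdd k)

end InnerProductSpace

/-- Global `1/√k` convergence of the measure of criticality for the incremental central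
descent method with inexact (Armijo) line search (Theorem 3.6):
`min_{0 ≤ l ≤ k-1} min_t ‖∇f_t(x_l)‖/‖V̂_l‖ ≤ √( (f_1(x_0) - f^min) / (k·min{β(1-β)/(2L), β}) )`. -/
theorem incremental_armijo_rate (n m : ℕ) (hm : 0 < m)
    (f : Fin m → EuclideanSpace ℝ (Fin n) → ℝ)
    (L : ℝ) (hL : 0 < L)
    (hdiff : ∀ i, Differentiable ℝ (f i))
    (hlip : ∀ i, ∀ x y : EuclideanSpace ℝ (Fin n),
      ‖gradient (f i) x - gradient (f i) y‖ ≤ L * ‖x - y‖)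
    (fmin : ℝ) (hbdd : ∀ i, ∀ y : EuclideanSpace ℝ (Fin n), fmin ≤ f i y)
    (β : ℝ) (hβ₀ : 0 < β) (hβ₁ : β < 1)
    (x : ℕ → EuclideanSpace ℝ (Fin n)) (j : ℕ → Fin m)
    (hj0 : j 0 = ⟨0, hm⟩)
    (α : ℕ → ℝ) (hα : ∀ k, 0 < α k)
    (V : ℕ → EuclideanSpace ℝ (Fin n)) (hVnz : ∀ k, V k ≠ 0)
    (hupd : ∀ k, x (k + 1) = x k + α k • ‖V k‖⁻¹ • V k)
    (harmijo : ∀ k, f (j k) (x (k + 1)) - f (j k) (x k) ≤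
      β * α k * (⟪gradient (f (j k)) (x k), V k⟫ / ‖V k‖))
    (hfeas : ∀ k, ⟪gradient (f (j k)) (x k), V k⟫ ≤ -‖gradient (f (j k)) (x k)‖)
    (hstep : ∀ k, min ((1 - β) / (2 * L)) 1 * (‖gradient (f (j k)) (x k)‖ / ‖V k‖) ≤ α k)
    (hlink : ∀ k, f (j (k + 1)) (x (k + 1)) ≤ f (j k) (x (k + 1))) :
    ∀ k : ℕ, ∀ hk : 1 ≤ k,
      (Finset.range k).inf' (Finset.nonempty_range_iff.mpr (Nat.one_le_iff_ne_zero.mp hk))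
        (fun l => (Finset.univ.inf' ⟨⟨0, hm⟩, Finset.mem_univ _⟩
          (fun t => ‖gradient (f t) (x l)‖)) / ‖V l‖) ≤
      Real.sqrt ((1 / (k : ℝ)) *
        ((f ⟨0, hm⟩ (x 0) - fmin) / min (β * (1 - β) / (2 * L)) β)) := by
  intro k hk
  have hc : 0 < min ((1 - β) / (2 * L)) 1 :=
    lt_min (div_pos (sub_pos.mpr hβ₁) (by positivity)) one_pos
  obtain ⟨l, hl, hle⟩ := incremental_armijo_rate_general hβ₀ hc (fun k ↦ hdiff (j k) (x k)) hVnz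
    (fun k ↦ hbdd (j k) (x k)) harmijo hfeas hstep hlink hk
  rw [hj0, mul_min_of_nonneg _ _ hβ₀.le, mul_one, ← mul_div_assoc β] at hle
  exact (inf'_inf'_div_le _ _ (fun t l ↦ ‖gradient (f t) (x l)‖) (Finset.mem_range.mpr hl)
    (Finset.mem_univ (j l)) (norm_nonneg (V l))).trans hle
end
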